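/- Forward uniqueness for mKdV in E: let 0 < t₁ < t₂ and let u and v be two solutions of mKdV with u, v ∈ E([t₁, t₂]). If u(t₁) = v(t₁), then u(t) = v(t) for all t ∈ [t₁, t₂]. -/

import Mathlib

open MeasureTheory Set Filter Topology

noncomputable section

namespace MKdVPaper

/-- The Japanese bracket `⟨y⟩ = √(1+y²)`. -/
def jap (y : ℝ) : ℝ := Real.sqrt (1 + y ^ 2)

/-- Truncated Fourier-type integral recovering the physical function from a profile `w`:
`(1/π) Re ∫_0^R e^{i(px + p³ t)} w(p) dp`. -/
def physPartial (w : ℝ → ℂ) (t x R : ℝ) : ℝ :=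
  (1 / Real.pi) *
    (∫ p in Ioc (0 : ℝ) R, Complex.exp (Complex.I * ((p * x + p ^ 3 * t : ℝ) : ℂ)) * w p).re

/-- `u` is the physical-space function associated with the profile `w` at time `t`, i.e.
`u(x) = (1/π) Re ∫_0^∞ e^{i(px + p³t)} w(p) dp` as an improper integral. -/
def IsPhys (w : ℝ → ℂ) (t : ℝ) (u : ℝ → ℝ) : Prop :=
  ∀ x : ℝ, Tendsto (fun R => physPartial w t x R) atTop (𝓝 (u x))

/-- Sup norm of a profile. -/
def supN (w : ℝ → ℂ) : ℝ := ⨆ p : ℝ, ‖w p‖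

/-- `L²((0,∞))` norm of the derivative of the profile. -/
def dL2 (w : ℝ → ℂ) : ℝ := (eLpNorm (deriv w) 2 (volume.restrict (Ioi 0))).toReal

/-- The `E(t)` norm: `‖ũ‖_{L^∞} + t^{-1/6} ‖∂_p ũ‖_{L²((0,∞))}`. -/
def EnormP (t : ℝ) (w : ℝ → ℂ) : ℝ := supN w + t ^ (-(1 / 6 : ℝ)) * dL2 w

/-- Membership conditions for `E(t)` on the profile side: profile of a real-valued
distribution, bounded and continuous on `(0,∞)`, with derivative in `L²((0,∞))`. -/
structure MemE (w : ℝ → ℂ) : Prop where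
  symm : ∀ p : ℝ, w (-p) = starRingEnd ℂ (w p)
  cont : ContinuousOn w (Ioi 0)
  bdd : BddAbove (range fun p : ℝ => ‖w p‖)
  diff : ∀ p ∈ Ioi (0 : ℝ), DifferentiableAt ℝ w p
  derivL2 : MemLp (deriv w) 2 (volume.restrict (Ioi 0))

/-- A space-time function of class `E(I)`: a physical function `u` together with its
profile `w(t,p) = e^{-itp³} û(t,p)`. -/
structure ESol (I : Set ℝ) where
  u : ℝ → ℝ → ℝ
  w : ℝ → ℝ → ℂ
  memE : ∀ t ∈ I, MemE (w t)
  isPhys : ∀ t ∈ I, IsPhys (w t) t (u t)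
  contt : ContinuousOn (fun q : ℝ × ℝ => w q.1 q.2) (I ×ˢ Ioi 0)

/-- Finiteness of the `E(I)` norm: `sup_{t ∈ I} ‖u(t)‖_{E(t)} < ∞`. -/
def FiniteEnorm (I : Set ℝ) (sol : ESol I) : Prop :=
  BddAbove ((fun t => EnormP t (sol.w t)) '' I)

/-- Time derivative of a test function. -/
def dt1 (φ : ℝ → ℝ → ℝ) : ℝ → ℝ → ℝ := fun t x => deriv (fun s => φ s x) t

/-- Space derivative of a test function. -/
def dx1 (φ : ℝ → ℝ → ℝ) : ℝ → ℝ → ℝ := fun t x => deriv (fun y => φ t y) x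

/-- `u` is a distributional solution of `∂ₜ u + ∂ₓ³ u + ε ∂ₓ(u³) = 0` on `I × ℝ`. -/
def IsSolOn (ε : ℝ) (u : ℝ → ℝ → ℝ) (I : Set ℝ) : Prop :=
  ∀ φ : ℝ → ℝ → ℝ,
    ContDiff ℝ (⊤ : ℕ∞) (fun q : ℝ × ℝ => φ q.1 q.2) →
    HasCompactSupport (fun q : ℝ × ℝ => φ q.1 q.2) →
    tsupport (fun q : ℝ × ℝ => φ q.1 q.2) ⊆ interior I ×ˢ univ →
    (∫ q : ℝ × ℝ,
      (u q.1 q.2 * (dt1 φ q.1 q.2 + dx1 (dx1 (dx1 φ)) q.1 q.2)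
        + ε * u q.1 q.2 ^ 3 * dx1 φ q.1 q.2)) = 0

/-- Self-similar solution: `S(t,x) = t^{-1/3} V(t^{-1/3} x)`. -/
def SelfSimilar {I : Set ℝ} (S : ESol I) : Prop :=
  ∃ V : ℝ → ℝ, ∀ t ∈ I, ∀ x : ℝ,
    S.u t x = t ^ (-(1 / 3 : ℝ)) * V (t ^ (-(1 / 3 : ℝ)) * x)

/-- The Fourier transform at time 1 recovered from the profile: `û(1,p) = e^{ip³} ũ(1,p)`. -/
def hatAtOne (w : ℝ → ℂ) : ℝ → ℂ := fun p => Complex.exp (Complex.I * ((p ^ 3 : ℝ) : ℂ)) * w p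

/-- The Fourier transforms at time 1 have the same limit at frequency `0⁺`. -/
def SameZeroLimit (w₁ w₂ : ℝ → ℂ) : Prop :=
  ∃ c : ℂ, Tendsto (hatAtOne w₁) (𝓝[>] (0 : ℝ)) (𝓝 c) ∧
    Tendsto (hatAtOne w₂) (𝓝[>] (0 : ℝ)) (𝓝 c)

/-- Truncated Airy–Fock integral. -/
def AiP (z R : ℝ) : ℂ :=
  ((1 / Real.pi : ℝ) : ℂ) *
    ∫ p in Ioc (0 : ℝ) R, Complex.exp (Complex.I * ((p * z + p ^ 3 : ℝ) : ℂ))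

/-- The Airy–Fock function `Ai(z) = (1/π)∫_0^∞ e^{i(pz+p³)} dp` (improper integral). -/
def AiFock (z : ℝ) : ℂ := limUnder atTop fun R => AiP z R

end MKdVPaper

/-! The profile bounds make `u` and `v` continuous and `O((1 + x₊)^{-3/4})`, by nonstationary phase
in the Airy representation. The difference `w = u - v` therefore solves `∂ₜw + ∂ₓ³w + ∂ₓF = 0` with
`w(t₁) = 0` and `|F| ≲ (1 + x₊)^{-3/2} |w|`. Take the energy `∫ w² ψ` with the increasing weight
`ψ = e^{x - ⟨x⟩}`, which vanishes at `-∞` and is bounded at `+∞`: Kato's smoothing term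
`-3 ∫ (∂ₓw)² ψ'` absorbs the derivative in `2 ∫ F ∂ₓw ψ`, leaving `∫ F² ψ²/ψ' ≲ ∫ w² ψ`, because
`(1 + x₊)^{-3} ≲ ψ'/ψ`. Mollifying in `x` makes the computation legitimate, and Grönwall's lemma
gives `w = 0`. -/

namespace MKdVPaper

open scoped ContDiff Convolution

/-! ### Oscillatory integrals -/

section OscillatoryIntegral

lemma integral_inv_sq_add_sq_le {A p₀ a b : ℝ} (hA : 0 < A) :
    ∫ p in a..b, (A ^ 2 + (p - p₀) ^ 2)⁻¹ ≤ Real.pi / A := by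
  have hderiv : ∀ p ∈ uIcc a b, HasDerivAt (fun p => Real.arctan ((p - p₀) / A) / A)
      (A ^ 2 + (p - p₀) ^ 2)⁻¹ p := by
    intro p _
    have h := ((((hasDerivAt_id p).sub_const p₀).div_const A).arctan).div_const A
    refine h.congr_deriv ?_
    have : A ^ 2 + (p - p₀) ^ 2 ≠ 0 := by positivity
    simp only [id]
    field_simp
  have hcont : Continuous fun p : ℝ => (A ^ 2 + (p - p₀) ^ 2)⁻¹ :=
    Continuous.inv₀ (by fun_prop) fun p => by positivity
  rw [intervalIntegral.integral_eq_sub_of_hasDerivAt hderiv (hcont.intervalIntegrable a b),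
    ← sub_div]
  gcongr
  linarith [Real.arctan_lt_pi_div_two ((b - p₀) / A), Real.neg_pi_div_two_lt_arctan ((a - p₀) / A)]

lemma integral_norm_mul_abs_le_eLpNorm_two {α E : Type*} [MeasurableSpace α] {μ : Measure α}
    [NormedAddCommGroup E] {f : α → E} {g : α → ℝ} (hf : MemLp f 2 μ) (hg : MemLp g 2 μ) :
    ∫ x, ‖f x‖ * |g x| ∂μ ≤ (eLpNorm f 2 μ).toReal * √(∫ x, g x ^ 2 ∂μ) := by
  have h := integral_mul_norm_le_Lp_mul_Lq (f := fun x => ‖f x‖) (g := g)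
    Real.HolderConjugate.two_two (by simpa using hf.norm) (by simpa using hg)
  rw [hf.eLpNorm_eq_integral_rpow_norm two_ne_zero ENNReal.ofNat_ne_top,
    ENNReal.toReal_ofReal (by positivity), Real.sqrt_eq_rpow]
  simpa using h

variable {φ q q' : ℝ → ℝ} {w w' : ℝ → ℂ} {a b m M : ℝ}

lemma integral_cexp_mul_eq (hφ : ∀ p ∈ uIcc a b, HasDerivAt φ (q p) p)
    (hq : ∀ p ∈ uIcc a b, HasDerivAt q (q' p) p) (hq' : ContinuousOn q' (uIcc a b))
    (hq0 : ∀ p ∈ uIcc a b, q p ≠ 0) (hw : ∀ p ∈ uIcc a b, HasDerivAt w (w' p) p)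
    (hw' : IntervalIntegrable w' volume a b) :
    ∫ p in a..b, Complex.exp (Complex.I * φ p) * w p =
      w b / (Complex.I * q b) * Complex.exp (Complex.I * φ b)
        - w a / (Complex.I * q a) * Complex.exp (Complex.I * φ a)
        - ∫ p in a..b, (w' p / q p - w p * (q' p / q p ^ 2)) / Complex.I
            * Complex.exp (Complex.I * φ p) := by
  have hqc : ContinuousOn (fun p => (q p : ℂ)) (uIcc a b) :=
    Complex.continuous_ofReal.comp_continuousOn fun p hp =>
      (hq p hp).continuousAt.continuousWithinAt
  have hq'c : ContinuousOn (fun p => (q' p : ℂ)) (uIcc a b) :=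
    Complex.continuous_ofReal.comp_continuousOn hq'
  have hq0c : ∀ p ∈ uIcc a b, (q p : ℂ) ≠ 0 := fun p hp => Complex.ofReal_ne_zero.2 (hq0 p hp)
  have hexp : ∀ p ∈ uIcc a b, HasDerivAt (fun p => Complex.exp (Complex.I * φ p))
      (Complex.exp (Complex.I * φ p) * (Complex.I * q p)) p :=
    fun p hp => ((hφ p hp).ofReal_comp.const_mul Complex.I).cexp
  have hexpc : ContinuousOn (fun p => Complex.exp (Complex.I * φ p)) (uIcc a b) :=
    fun p hp => (hexp p hp).continuousAt.continuousWithinAt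
  have hwc : ContinuousOn w (uIcc a b) := fun p hp => (hw p hp).continuousAt.continuousWithinAt
  have hdiv : ∀ p ∈ uIcc a b, HasDerivAt (fun p => w p / (Complex.I * q p))
      ((w' p / q p - w p * (q' p / q p ^ 2)) / Complex.I) p := fun p hp => by
    have := hq0c p hp
    refine ((hw p hp).div ((hq p hp).ofReal_comp.const_mul Complex.I)
      (mul_ne_zero Complex.I_ne_zero this)).congr_deriv ?_
    field_simp
  have hdiv_int : IntervalIntegrable (fun p => w' p / q p - w p * (q' p / q p ^ 2)) volume a b :=
    ((hw'.mul_continuousOn (hqc.inv₀ hq0c)).congr fun p _ => (div_eq_mul_inv _ _).symm).sub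
      (hwc.mul (hq'c.div (hqc.pow 2) fun p hp => pow_ne_zero 2 (hq0c p hp))).intervalIntegrable
  rw [← intervalIntegral.integral_mul_deriv_eq_deriv_mul hdiv hexp
    (hdiv_int.div_const _) (hexpc.mul (continuousOn_const.mul hqc)).intervalIntegrable]
  refine intervalIntegral.integral_congr fun p hp => ?_
  have := hq0c p hp
  field_simp

lemma integral_deriv_div_sq_le (hab : a ≤ b) (hm : 0 < m)
    (hq : ∀ p ∈ Icc a b, HasDerivAt q (q' p) p) (hq' : ContinuousOn q' (Icc a b))
    (hmq : ∀ p ∈ Icc a b, m ≤ |q p|) : ∫ p in a..b, q' p / q p ^ 2 ≤ 2 / m := by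
  have hq0 : ∀ p ∈ Icc a b, q p ≠ 0 := fun p hp => abs_pos.1 (hm.trans_le (hmq p hp))
  have hqc : ContinuousOn q (Icc a b) := fun p hp => (hq p hp).continuousAt.continuousWithinAt
  have hderiv : ∀ p ∈ Icc a b, HasDerivAt (fun p => -(q p)⁻¹) (q' p / q p ^ 2) p := fun p hp =>
    ((hq p hp).inv (hq0 p hp)).neg.congr_deriv (by ring)
  have hinv : ∀ p ∈ Icc a b, |(q p)⁻¹| ≤ m⁻¹ := fun p hp => by
    rw [abs_inv]; exact inv_anti₀ hm (hmq p hp)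
  rw [← uIcc_of_le hab] at hderiv hq' hqc hq0
  rw [intervalIntegral.integral_eq_sub_of_hasDerivAt hderiv
    (hq'.div (hqc.pow 2) fun p hp => pow_ne_zero 2 (hq0 p hp)).intervalIntegrable, div_eq_mul_inv]
  linarith [(abs_le.1 (hinv a ⟨le_rfl, hab⟩)).2, (abs_le.1 (hinv b ⟨hab, le_rfl⟩)).1]

lemma norm_integral_deriv_div_mul_cexp_le (hab : a ≤ b) (hm : 0 < m)
    (hq : ∀ p ∈ Icc a b, HasDerivAt q (q' p) p)
    (hq' : ContinuousOn q' (Icc a b)) (hq'0 : ∀ p ∈ Icc a b, 0 ≤ q' p)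
    (hmq : ∀ p ∈ Icc a b, m ≤ |q p|)
    (hw' : IntervalIntegrable w' volume a b) (hwM : ∀ p ∈ Icc a b, ‖w p‖ ≤ M) :
    ‖∫ p in a..b, (w' p / q p - w p * (q' p / q p ^ 2)) / Complex.I
      * Complex.exp (Complex.I * φ p)‖ ≤ (∫ p in a..b, ‖w' p‖ * |(q p)⁻¹|) + M * (2 / m) := by
  have hq0 : ∀ p ∈ Icc a b, q p ≠ 0 := fun p hp => abs_pos.1 (hm.trans_le (hmq p hp))
  have hqc : ContinuousOn q (Icc a b) := fun p hp => (hq p hp).continuousAt.continuousWithinAt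
  have hM : 0 ≤ M := (norm_nonneg _).trans (hwM a ⟨le_rfl, hab⟩)
  have hderiv_int : IntervalIntegrable (fun p => ‖w' p‖ * |(q p)⁻¹|) volume a b :=
    hw'.norm.mul_continuousOn (by rw [uIcc_of_le hab]; exact (hqc.inv₀ hq0).abs)
  have hquot_int : IntervalIntegrable (fun p => M * (q' p / q p ^ 2)) volume a b :=
    (continuousOn_const.mul (hq'.div (hqc.pow 2) fun p hp =>
      pow_ne_zero 2 (hq0 p hp))).intervalIntegrable_of_Icc hab
  refine (intervalIntegral.norm_integral_le_of_norm_le hab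
    (ae_of_all _ fun p hp => ?_) (hderiv_int.add hquot_int)).trans ?_
  · have hp := Ioc_subset_Icc_self hp
    rw [norm_mul, Complex.norm_exp_I_mul_ofReal, mul_one, norm_div, Complex.norm_I, div_one]
    refine (norm_sub_le _ _).trans (add_le_add (by simp [div_eq_mul_inv]) ?_)
    rw [norm_mul, norm_div, norm_pow, Complex.norm_real, Complex.norm_real, Real.norm_eq_abs,
      Real.norm_eq_abs, sq_abs, abs_of_nonneg (hq'0 p hp)]
    have := hq'0 p hp
    gcongr
    exact hwM p hp
  · rw [intervalIntegral.integral_add hderiv_int hquot_int, intervalIntegral.integral_const_mul]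
    gcongr
    exact integral_deriv_div_sq_le hab hm hq hq' hmq

lemma norm_integral_cexp_mul_le (hab : a ≤ b) (hm : 0 < m)
    (hφ : ∀ p ∈ Icc a b, HasDerivAt φ (q p) p) (hq : ∀ p ∈ Icc a b, HasDerivAt q (q' p) p)
    (hq' : ContinuousOn q' (Icc a b)) (hq'0 : ∀ p ∈ Icc a b, 0 ≤ q' p)
    (hmq : ∀ p ∈ Icc a b, m ≤ |q p|) (hw : ∀ p ∈ Icc a b, HasDerivAt w (w' p) p)
    (hw' : IntervalIntegrable w' volume a b) (hwM : ∀ p ∈ Icc a b, ‖w p‖ ≤ M) :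
    ‖∫ p in a..b, Complex.exp (Complex.I * φ p) * w p‖ ≤
      4 * (M / m) + ∫ p in a..b, ‖w' p‖ * |(q p)⁻¹| := by
  have hM : 0 ≤ M := (norm_nonneg _).trans (hwM a ⟨le_rfl, hab⟩)
  have hboundary : ∀ p ∈ Icc a b,
      ‖w p / (Complex.I * q p) * Complex.exp (Complex.I * φ p)‖ ≤ M / m := fun p hp => by
    rw [norm_mul, Complex.norm_exp_I_mul_ofReal, mul_one, norm_div, norm_mul, Complex.norm_I,
      one_mul, Complex.norm_real]
    exact div_le_div₀ hM (hwM p hp) hm (hmq p hp)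
  have hu := uIcc_of_le hab
  rw [integral_cexp_mul_eq (by rwa [hu]) (by rwa [hu]) (by rwa [hu])
    (by rw [hu]; exact fun p hp => abs_pos.1 (hm.trans_le (hmq p hp))) (by rwa [hu]) hw']
  refine ((norm_sub_le _ _).trans (add_le_add ((norm_sub_le _ _).trans (add_le_add
    (hboundary b ⟨hab, le_rfl⟩) (hboundary a ⟨le_rfl, hab⟩)))
    (norm_integral_deriv_div_mul_cexp_le hab hm hq hq' hq'0 hmq hw' hwM))).trans_eq ?_
  ring

lemma integral_norm_mul_abs_inv_le {f : ℝ → ℂ} {A L p₀ : ℝ} (hab : a ≤ b)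
    (hf : MemLp f 2 (volume.restrict (Ioc a b))) (hqc : ContinuousOn q (Icc a b)) (hA : 0 < A)
    (hL : 0 < L) (hq : ∀ p ∈ Icc a b, L * (A ^ 2 + (p - p₀) ^ 2) ≤ q p ^ 2) :
    ∫ p in a..b, ‖f p‖ * |(q p)⁻¹| ≤
      2 * (eLpNorm f 2 (volume.restrict (Ioc a b))).toReal / √(L * A) := by
  have hpos : ∀ p, 0 < L * (A ^ 2 + (p - p₀) ^ 2) := fun p => by positivity
  have hq0 : ∀ p ∈ Icc a b, q p ≠ 0 := fun p hp =>
    sq_pos_iff.1 ((hpos p).trans_le (hq p hp))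
  have hinv : ContinuousOn (fun p => (q p)⁻¹) (Icc a b) := hqc.inv₀ hq0
  have hg : MemLp (fun p => (q p)⁻¹) 2 (volume.restrict (Ioc a b)) :=
    (memLp_two_iff_integrable_sq ((hinv.mono Ioc_subset_Icc_self).aestronglyMeasurable
      measurableSet_Ioc)).2 ((hinv.pow 2).integrableOn_Icc.mono_set Ioc_subset_Icc_self)
  have hsq : ∫ p in a..b, (q p)⁻¹ ^ 2 ≤ L⁻¹ * (Real.pi / A) := by
    have hmajorant : IntervalIntegrable (fun p => L⁻¹ * (A ^ 2 + (p - p₀) ^ 2)⁻¹) volume a b :=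
      Continuous.intervalIntegrable (continuous_const.mul
        (Continuous.inv₀ (by fun_prop) fun p => by positivity)) a b
    refine (intervalIntegral.integral_mono_on hab
      ((hinv.pow 2).intervalIntegrable_of_Icc hab) hmajorant fun p hp => ?_).trans ?_
    · rw [Pi.pow_apply, inv_pow, ← mul_inv]
      exact inv_anti₀ (hpos p) (hq p hp)
    · rw [intervalIntegral.integral_const_mul]
      gcongr
      exact integral_inv_sq_add_sq_le hA
  rw [intervalIntegral.integral_of_le hab] at hsq ⊢
  calc ∫ p in Ioc a b, ‖f p‖ * |(q p)⁻¹|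
      ≤ (eLpNorm f 2 (volume.restrict (Ioc a b))).toReal * √(L⁻¹ * (Real.pi / A)) := by
        refine (integral_norm_mul_abs_le_eLpNorm_two hf hg).trans ?_
        gcongr
    _ ≤ (eLpNorm f 2 (volume.restrict (Ioc a b))).toReal * √(2 ^ 2 / (L * A)) := by
        rw [inv_mul_eq_div, div_div, mul_comm A]
        gcongr
        linarith [Real.pi_le_four]
    _ = 2 * (eLpNorm f 2 (volume.restrict (Ioc a b))).toReal / √(L * A) := by
        rw [Real.sqrt_div' _ (by positivity), Real.sqrt_sq zero_le_two]
        ring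

end OscillatoryIntegral

/-! ### The Fourier–Airy representation of a profile -/

/-- The norm `‖w‖_{L^∞} + ‖∂ₚw‖_{L²((0,∞))}` of a profile, which controls its oscillatory
integrals. -/
def profileNorm (w : ℝ → ℂ) : ℝ := supN w + dL2 w

/-- The phase `px + p³t` of the Fourier–Airy representation, with derivative `x + 3tp²`
in `p`. -/
def phase (t x p : ℝ) : ℝ := p * x + p ^ 3 * t

/-- The part of the Fourier–Airy representation of a profile coming from the frequencies between
`a` and `b`. -/
def profileIntegral (w : ℝ → ℂ) (t x a b : ℝ) : ℂ :=
  ∫ p in a..b, Complex.exp (Complex.I * phase t x p) * w p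

lemma supN_le_profileNorm (w : ℝ → ℂ) : supN w ≤ profileNorm w :=
  le_add_of_nonneg_right ENNReal.toReal_nonneg

lemma hasDerivAt_phase (t x p : ℝ) : HasDerivAt (phase t x) (x + 3 * t * p ^ 2) p :=
  (((hasDerivAt_id p).mul_const x).add ((hasDerivAt_pow 3 p).mul_const t)).congr_deriv (by
    norm_num; ring)

lemma norm_cexp_phase_mul (w : ℝ → ℂ) (t x p : ℝ) :
    ‖Complex.exp (Complex.I * phase t x p) * w p‖ = ‖w p‖ := by
  rw [norm_mul, Complex.norm_exp_I_mul_ofReal, one_mul]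

lemma physPartial_eq_re_profileIntegral (w : ℝ → ℂ) (t x : ℝ) {R : ℝ} (hR : 0 ≤ R) :
    physPartial w t x R = (1 / Real.pi) * (profileIntegral w t x 0 R).re := by
  rw [profileIntegral, intervalIntegral.integral_of_le hR]; rfl

lemma abs_inv_pi_mul_re_le (z : ℂ) : |1 / Real.pi * z.re| ≤ ‖z‖ := by
  have h : 1 / Real.pi ≤ 1 := (div_le_one Real.pi_pos).2 (by linarith [Real.pi_gt_three])
  rw [abs_mul, abs_of_pos (by positivity)]
  exact (mul_le_of_le_one_left (abs_nonneg _) h).trans (Complex.abs_re_le_norm z)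

lemma abs_physPartial_le (w : ℝ → ℂ) (t x : ℝ) {R : ℝ} (hR : 0 ≤ R) :
    |physPartial w t x R| ≤ ‖profileIntegral w t x 0 R‖ := by
  rw [physPartial_eq_re_profileIntegral w t x hR]
  exact abs_inv_pi_mul_re_le _

namespace MemE

variable {w : ℝ → ℂ} {t x a b : ℝ}

lemma norm_le_supN (hw : MemE w) (p : ℝ) : ‖w p‖ ≤ supN w := le_ciSup hw.bdd p

lemma supN_nonneg (hw : MemE w) : 0 ≤ supN w := (norm_nonneg _).trans (hw.norm_le_supN 0)

lemma profileNorm_nonneg (hw : MemE w) : 0 ≤ profileNorm w :=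
  hw.supN_nonneg.trans (supN_le_profileNorm w)

lemma integrableOn_cexp_phase_mul (hw : MemE w) (t x b : ℝ) :
    IntegrableOn (fun p => Complex.exp (Complex.I * phase t x p) * w p) (Ioc 0 b) := by
  refine IntegrableOn.of_bound (C := supN w) (by simp) (ContinuousOn.aestronglyMeasurable
    (ContinuousOn.mul ?_ (hw.cont.mono fun p hp => hp.1)) measurableSet_Ioc)
    (ae_of_all _ fun p => ?_)
  · unfold phase; fun_prop
  · rw [norm_cexp_phase_mul]; exact hw.norm_le_supN p

lemma intervalIntegrable (hw : MemE w) (t x : ℝ) (ha : 0 ≤ a) (hb : 0 ≤ b) :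
    IntervalIntegrable (fun p => Complex.exp (Complex.I * phase t x p) * w p) volume a b :=
  ((intervalIntegrable_iff_integrableOn_Ioc_of_le ha).2
    (hw.integrableOn_cexp_phase_mul t x a)).symm.trans
  ((intervalIntegrable_iff_integrableOn_Ioc_of_le hb).2 (hw.integrableOn_cexp_phase_mul t x b))

lemma profileIntegral_add (hw : MemE w) (t x : ℝ) {c : ℝ} (ha : 0 ≤ a) (hb : 0 ≤ b)
    (hc : 0 ≤ c) :
    profileIntegral w t x a b + profileIntegral w t x b c = profileIntegral w t x a c :=
  intervalIntegral.integral_add_adjacent_intervals (hw.intervalIntegrable t x ha hb)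
    (hw.intervalIntegrable t x hb hc)

lemma norm_profileIntegral_le_mul (hw : MemE w) (t x : ℝ) (hab : a ≤ b) :
    ‖profileIntegral w t x a b‖ ≤ profileNorm w * (b - a) := by
  rw [← abs_of_nonneg (sub_nonneg.2 hab)]
  exact intervalIntegral.norm_integral_le_of_norm_le_const fun p _ => by
    rw [norm_cexp_phase_mul]; exact (hw.norm_le_supN p).trans (supN_le_profileNorm w)

lemma norm_profileIntegral_le_of_pos (hw : MemE w) {A L p₀ : ℝ} (ht : 0 ≤ t) (ha : 0 < a)
    (hab : a ≤ b) (hA : 1 ≤ A) (hL : 0 < L)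
    (hq : ∀ p ∈ Icc a b, L * (A ^ 2 + (p - p₀) ^ 2) ≤ (x + 3 * t * p ^ 2) ^ 2) :
    ‖profileIntegral w t x a b‖ ≤ 4 * profileNorm w / √(L * A) := by
  have hsub : Ioc a b ⊆ Ioi 0 := fun p hp => ha.trans hp.1
  have hderiv : MemLp (deriv w) 2 (volume.restrict (Ioc a b)) :=
    hw.derivL2.mono_measure (Measure.restrict_mono hsub le_rfl)
  have hm : ∀ p ∈ Icc a b, √(L * A) ≤ |x + 3 * t * p ^ 2| := fun p hp => by
    refine Real.sqrt_le_iff.2 ⟨abs_nonneg _, ?_⟩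
    rw [sq_abs]
    refine le_trans ?_ (hq p hp)
    gcongr
    nlinarith [sq_nonneg (p - p₀)]
  have hstationary := norm_integral_cexp_mul_le hab (by positivity : 0 < √(L * A))
    (q' := fun p => 6 * t * p) (fun p _ => hasDerivAt_phase t x p)
    (fun p _ => (((hasDerivAt_pow 2 p).const_mul (3 * t)).const_add x).congr_deriv
      (by norm_num; ring))
    (by fun_prop) (fun p hp => mul_nonneg (by positivity) (ha.le.trans hp.1)) hm
    (fun p hp => (hw.diff p (ha.trans_le hp.1)).hasDerivAt)
    ((intervalIntegrable_iff_integrableOn_Ioc_of_le hab).2 (hderiv.integrable one_le_two))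
    fun p _ => hw.norm_le_supN p
  have hcauchy := integral_norm_mul_abs_inv_le hab hderiv (by fun_prop) (by positivity) hL hq
  have hmono : (eLpNorm (deriv w) 2 (volume.restrict (Ioc a b))).toReal ≤ dL2 w :=
    ENNReal.toReal_mono hw.derivL2.eLpNorm_ne_top
      (eLpNorm_mono_measure _ (Measure.restrict_mono hsub le_rfl))
  have hdL2 : 0 ≤ dL2 w := ENNReal.toReal_nonneg
  calc ‖profileIntegral w t x a b‖ ≤ 4 * (supN w / √(L * A)) + 2 * dL2 w / √(L * A) := by
        refine hstationary.trans (add_le_add_right (hcauchy.trans ?_) _)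
        gcongr
    _ ≤ 4 * (supN w / √(L * A)) + 4 * dL2 w / √(L * A) := by gcongr; norm_num
    _ = 4 * profileNorm w / √(L * A) := by rw [profileNorm]; ring

lemma norm_profileIntegral_le (hw : MemE w) {A L p₀ : ℝ} (ht : 0 ≤ t) (ha : 0 ≤ a)
    (hab : a ≤ b) (hA : 1 ≤ A) (hL : 0 < L)
    (hq : ∀ p ∈ Icc a b, L * (A ^ 2 + (p - p₀) ^ 2) ≤ (x + 3 * t * p ^ 2) ^ 2) :
    ‖profileIntegral w t x a b‖ ≤ 4 * profileNorm w / √(L * A) := by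
  rcases hab.eq_or_lt with rfl | hlt
  · rw [profileIntegral, intervalIntegral.integral_same, norm_zero]
    have := hw.profileNorm_nonneg
    positivity
  have hcont : ContinuousOn (fun c => profileIntegral w t x c b) (Icc a b) := by
    rw [← uIcc_of_le hab]
    refine intervalIntegral.continuousOn_primitive_interval_left ?_
    rw [uIcc_of_le hab, integrableOn_Icc_iff_integrableOn_Ioc]
    exact (hw.integrableOn_cexp_phase_mul t x b).mono_set (Ioc_subset_Ioc_left ha)
  have hlim := ((hcont a (left_mem_Icc.2 hab)).mono Ioc_subset_Icc_self).norm
  have : (𝓝[Ioc a b] a).NeBot := by rw [nhdsWithin_Ioc_eq_nhdsGT hlt]; infer_instance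
  refine le_of_tendsto hlim ?_
  filter_upwards [self_mem_nhdsWithin] with c hc
  exact hw.norm_profileIntegral_le_of_pos ht (ha.trans_lt hc.1) hc.2 hA hL
    fun p hp => hq p ⟨hc.1.le.trans hp.1, hp.2⟩

end MemE

/-! ### Spatial decay and continuity -/

/-- The spatial majorant `(1 + x₊)^{-3/4}` of functions of class `E(I)`. -/
def decay (x : ℝ) : ℝ := (1 + max x 0) ^ (-(3 / 4) : ℝ)

lemma decay_pos (x : ℝ) : 0 < decay x := Real.rpow_pos_of_pos (by positivity) _

lemma decay_le_one (x : ℝ) : decay x ≤ 1 :=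
  Real.rpow_le_one_of_one_le_of_nonpos (by simp) (by norm_num)

lemma continuous_decay : Continuous decay := by
  unfold decay
  exact Continuous.rpow_const (by fun_prop) fun x => .inl (by positivity)

lemma decay_le_two_mul_decay {x y : ℝ} (h : 1 + max x 0 ≤ 2 * (1 + max y 0)) :
    decay y ≤ 2 * decay x := by
  have hdouble : (2 * (1 + max y 0)) ^ (-(3 / 4) : ℝ) ≤ decay x :=
    Real.rpow_le_rpow_of_nonpos (by positivity) h (by norm_num)
  have hhalf : (1 / 2 : ℝ) ≤ 2 ^ (-(3 / 4) : ℝ) := by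
    rw [one_div, ← Real.rpow_neg_one]
    exact Real.rpow_le_rpow_of_exponent_le (by norm_num) (by norm_num)
  rw [Real.mul_rpow (by norm_num) (by positivity)] at hdouble
  have := mul_le_mul_of_nonneg_right hhalf (decay_pos y).le
  rw [decay] at this ⊢
  linarith

lemma decay_le_of_abs_sub_le_one {x y : ℝ} (h : |x - y| ≤ 1) : decay y ≤ 2 * decay x := by
  refine decay_le_two_mul_decay ?_
  have := max_le (show x ≤ 1 + max y 0 by linarith [(abs_le.1 h).2, le_max_left y 0])
    (show 0 ≤ 1 + max y 0 by positivity)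
  linarith [le_max_right y 0]

section PhaseDerivative

variable {κ t x p p₀ : ℝ}

lemma phase_deriv_sq_ge_of_one_le (hκ : 0 ≤ κ) (hκ1 : κ ≤ 1) (hκt : κ ≤ t) (hx : 1 ≤ x) :
    κ ^ 2 * x * (√x ^ 2 + (p - 0) ^ 2) ≤ (x + 3 * t * p ^ 2) ^ 2 := by
  rw [Real.sq_sqrt (by linarith), sub_zero]
  have hκsq : κ ^ 2 ≤ 1 := by nlinarith
  have hκsqt : κ ^ 2 ≤ t := by nlinarith
  have hxp : 0 ≤ x * p ^ 2 := by positivity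
  nlinarith [mul_le_mul_of_nonneg_right hκsq (sq_nonneg x),
    mul_le_mul_of_nonneg_right hκsqt hxp, sq_nonneg (3 * t * p ^ 2),
    mul_nonneg (hκ.trans hκt) hxp]

lemma phase_deriv_sq_ge_of_le_sub_one (hκ : 0 ≤ κ) (hκt : κ ≤ t) (hp : 0 ≤ p)
    (hpp₀ : p ≤ p₀ - 1) (hx : 3 * t * p₀ ^ 2 = -x) :
    κ ^ 2 * (1 ^ 2 + (p - p₀) ^ 2) ≤ (x + 3 * t * p ^ 2) ^ 2 := by
  have ht : 0 ≤ t := hκ.trans hκt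
  have hdiff : 1 ≤ p₀ - p := by linarith
  have hfactor : p₀ - p ≤ (p₀ - p) * (p₀ + p) := by nlinarith
  have hlower : κ * (3 * (p₀ - p)) ≤ t * (3 * ((p₀ - p) * (p₀ + p))) := by gcongr
  calc κ ^ 2 * (1 ^ 2 + (p - p₀) ^ 2) ≤ (κ * (3 * (p₀ - p))) ^ 2 := by
        rw [mul_pow]; gcongr; nlinarith
    _ ≤ (t * (3 * ((p₀ - p) * (p₀ + p)))) ^ 2 := by gcongr
    _ = (x + 3 * t * p ^ 2) ^ 2 := by rw [← neg_eq_iff_eq_neg.2 hx]; ring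

lemma phase_deriv_sq_ge_of_add_one_le (hκ : 0 ≤ κ) (hκt : κ ≤ t) (hp₀ : 0 ≤ p₀)
    (hpp₀ : p₀ + 1 ≤ p) (hx : -x ≤ 3 * t * p₀ ^ 2) :
    κ ^ 2 * (1 ^ 2 + (p - p₀) ^ 2) ≤ (x + 3 * t * p ^ 2) ^ 2 := by
  have ht : 0 ≤ t := hκ.trans hκt
  have hdiff : 1 ≤ p - p₀ := by linarith
  have hfactor : p - p₀ ≤ (p - p₀) * (p + p₀) := by nlinarith
  have hlower : κ * (3 * (p - p₀)) ≤ t * (3 * ((p - p₀) * (p + p₀))) := by gcongr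
  calc κ ^ 2 * (1 ^ 2 + (p - p₀) ^ 2) ≤ (κ * (3 * (p - p₀))) ^ 2 := by
        rw [mul_pow]; gcongr; nlinarith
    _ ≤ (x + 3 * t * p ^ 2) ^ 2 := by gcongr; nlinarith

lemma phase_deriv_sq_ge_of_le {R : ℝ} (hκ : 0 ≤ κ) (hκt : κ ≤ t) (hR : 1 ≤ R) (hRp : R ≤ p)
    (hx : |x| ≤ κ * R ^ 2) :
    (κ * R) ^ 2 * (1 ^ 2 + (p - 0) ^ 2) ≤ (x + 3 * t * p ^ 2) ^ 2 := by
  have hRp2 : R ^ 2 ≤ p ^ 2 := by gcongr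
  have hlower : 2 * κ * p ^ 2 ≤ x + 3 * t * p ^ 2 := by
    nlinarith [(abs_le.1 hx).1, mul_le_mul_of_nonneg_left hRp2 hκ,
      mul_le_mul_of_nonneg_right hκt (sq_nonneg p)]
  calc (κ * R) ^ 2 * (1 ^ 2 + (p - 0) ^ 2) ≤ (κ * p) ^ 2 * (2 * p) ^ 2 := by gcongr; nlinarith
    _ = (2 * κ * p ^ 2) ^ 2 := by ring
    _ ≤ (x + 3 * t * p ^ 2) ^ 2 := by gcongr

end PhaseDerivative

namespace MemE

variable {w : ℝ → ℂ} {κ t x : ℝ}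

lemma norm_profileIntegral_le_rpow (hw : MemE w) (hκ : 0 < κ) (hκ1 : κ ≤ 1) (hκt : κ ≤ t)
    (hx : 1 ≤ x) {R : ℝ} (hR : 0 ≤ R) :
    ‖profileIntegral w t x 0 R‖ ≤ 4 * profileNorm w / κ * x ^ (-(3 / 4) : ℝ) := by
  have hx0 : 0 < x := by linarith
  have hbound := hw.norm_profileIntegral_le (hκ.le.trans hκt) le_rfl hR
    (Real.one_le_sqrt.2 hx) (by positivity : 0 < κ ^ 2 * x)
    fun p _ => phase_deriv_sq_ge_of_one_le hκ.le hκ1 hκt hx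
  have hsqrt : √(κ ^ 2 * x * √x) = κ * x ^ (3 / 4 : ℝ) := by
    have : x * √x = x ^ (3 / 2 : ℝ) := by
      rw [Real.sqrt_eq_rpow, ← Real.rpow_one_add' hx0.le (by norm_num)]; norm_num
    rw [mul_assoc, Real.sqrt_mul (by positivity), Real.sqrt_sq hκ.le, this, Real.sqrt_eq_rpow,
      ← Real.rpow_mul hx0.le]
    norm_num
  rw [hsqrt] at hbound
  rwa [Real.rpow_neg hx0.le, ← div_eq_mul_inv, div_div]

lemma norm_profileIntegral_le_of_stationary (hw : MemE w) (hκ : 0 < κ) (hκt : κ ≤ t) {p₀ : ℝ}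
    (hstat : 3 * t * p₀ ^ 2 = max (-x) 0) :
    ‖profileIntegral w t x 0 (max (p₀ - 1) 0)‖ ≤ 4 * profileNorm w / κ := by
  have ht : 0 < t := hκ.trans_le hκt
  have hN := hw.profileNorm_nonneg
  rcases le_total p₀ 1 with h | h
  · rw [max_eq_right (by linarith), profileIntegral, intervalIntegral.integral_same, norm_zero]
    positivity
  · have hx : 3 * t * p₀ ^ 2 = -x := by
      refine hstat.trans (max_eq_left (le_of_not_gt fun hneg => ?_))
      rw [max_eq_right hneg.le] at hstat
      exact absurd hstat (by positivity)
    have hbound := hw.norm_profileIntegral_le ht.le le_rfl (le_max_right (p₀ - 1) 0) le_rfl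
      (by positivity : 0 < κ ^ 2) fun p hp => phase_deriv_sq_ge_of_le_sub_one hκ.le hκt hp.1
        (hp.2.trans_eq (max_eq_left (by linarith))) hx
    rwa [mul_one, Real.sqrt_sq hκ.le] at hbound

lemma norm_profileIntegral_le_of_add_one_le (hw : MemE w) (hκ : 0 < κ) (hκ1 : κ ≤ 1)
    (hκt : κ ≤ t) {p₀ R : ℝ} (hp₀ : 0 ≤ p₀) (hstat : 3 * t * p₀ ^ 2 = max (-x) 0)
    (hR : p₀ + 1 ≤ R) : ‖profileIntegral w t x 0 R‖ ≤ 10 * profileNorm w / κ := by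
  have ht : 0 < t := hκ.trans_le hκt
  have hN := hw.profileNorm_nonneg
  have hm : p₀ - 1 ≤ max (p₀ - 1) 0 := le_max_left _ _
  have hm0 : 0 ≤ max (p₀ - 1) 0 := le_max_right _ _
  have hmiddle : ‖profileIntegral w t x (max (p₀ - 1) 0) (p₀ + 1)‖ ≤ 2 * profileNorm w := by
    refine (hw.norm_profileIntegral_le_mul t x (max_le (by linarith) (by linarith))).trans ?_
    nlinarith
  have hright : ‖profileIntegral w t x (p₀ + 1) R‖ ≤ 4 * profileNorm w / κ := by
    have hbound := hw.norm_profileIntegral_le ht.le (by linarith) hR le_rfl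
      (by positivity : 0 < κ ^ 2) fun p hp =>
        phase_deriv_sq_ge_of_add_one_le hκ.le hκt hp₀ hp.1 (hstat ▸ le_max_left _ _)
    rwa [mul_one, Real.sqrt_sq hκ.le] at hbound
  have hdiv : profileNorm w ≤ profileNorm w / κ := le_div_self hN hκ hκ1
  rw [← hw.profileIntegral_add t x le_rfl hm0 (by linarith),
    ← hw.profileIntegral_add t x hm0 (by linarith : 0 ≤ p₀ + 1) (by linarith)]
  refine (norm_add_le_of_le (hw.norm_profileIntegral_le_of_stationary hκ hκt hstat)
    (norm_add_le_of_le hmiddle hright)).trans ?_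
  calc 4 * profileNorm w / κ + (2 * profileNorm w + 4 * profileNorm w / κ)
      ≤ 10 * profileNorm w / κ := by ring_nf at hdiv ⊢; linarith

lemma norm_profileIntegral_tail_le (hw : MemE w) (hκ : 0 < κ) (hκt : κ ≤ t) {R R' : ℝ}
    (hR : 1 ≤ R) (hRR' : R ≤ R') (hx : |x| ≤ κ * R ^ 2) :
    ‖profileIntegral w t x R R'‖ ≤ 4 * profileNorm w / κ / R := by
  have hR0 : 0 < R := by linarith
  have h := hw.norm_profileIntegral_le (hκ.le.trans hκt) hR0.le hRR' le_rfl
    (by positivity : 0 < (κ * R) ^ 2)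
    fun p hp => phase_deriv_sq_ge_of_le hκ.le hκt hR hp.1 hx
  rwa [mul_one, Real.sqrt_sq (by positivity), ← div_div] at h

lemma abs_le_decay (hw : MemE w) (hκ : 0 < κ) (hκ1 : κ ≤ 1) (hκt : κ ≤ t) {u : ℝ → ℝ}
    (hu : IsPhys w t u) (x : ℝ) : |u x| ≤ 20 * profileNorm w / κ * decay x := by
  have hN := hw.profileNorm_nonneg
  suffices h : ∀ᶠ R in atTop, ‖profileIntegral w t x 0 R‖ ≤ 20 * profileNorm w / κ * decay x by
    refine le_of_tendsto (hu x).abs ?_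
    filter_upwards [h, eventually_ge_atTop 0] with R h hR
    exact (abs_physPartial_le w t x hR).trans h
  rcases le_total x 1 with hx | hx
  · have hstat : 3 * t * √(max (-x) 0 / (3 * t)) ^ 2 = max (-x) 0 := by
      have ht : 0 < t := hκ.trans_le hκt
      rw [Real.sq_sqrt (by positivity)]; field_simp
    filter_upwards [eventually_ge_atTop (√(max (-x) 0 / (3 * t)) + 1)] with R hR
    have hdecay : decay 0 ≤ 2 * decay x := decay_le_two_mul_decay (by
      rw [max_self]; linarith [max_le hx zero_le_one])
    rw [show decay 0 = 1 by simp [decay]] at hdecay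
    calc ‖profileIntegral w t x 0 R‖ ≤ 10 * profileNorm w / κ * 1 := by
          rw [mul_one]
          exact hw.norm_profileIntegral_le_of_add_one_le hκ hκ1 hκt (Real.sqrt_nonneg _) hstat hR
      _ ≤ 10 * profileNorm w / κ * (2 * decay x) := by gcongr
      _ = 20 * profileNorm w / κ * decay x := by ring
  · filter_upwards [eventually_ge_atTop 0] with R hR
    have hdecay : decay (x - 1) ≤ 2 * decay x := decay_le_of_abs_sub_le_one (by simp)
    rw [decay, max_eq_left (by linarith), add_sub_cancel] at hdecay
    calc ‖profileIntegral w t x 0 R‖ ≤ 4 * profileNorm w / κ * x ^ (-(3 / 4) : ℝ) :=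
          hw.norm_profileIntegral_le_rpow hκ hκ1 hκt hx hR
      _ ≤ 10 * profileNorm w / κ * (2 * decay x) := by gcongr; norm_num
      _ = 20 * profileNorm w / κ * decay x := by ring

lemma abs_sub_physPartial_le (hw : MemE w) (hκ : 0 < κ) (hκt : κ ≤ t) {u : ℝ → ℝ}
    (hu : IsPhys w t u) {R : ℝ} (hR : 1 ≤ R) (hx : |x| ≤ κ * R ^ 2) :
    |u x - physPartial w t x R| ≤ 4 * profileNorm w / κ / R := by
  refine le_of_tendsto ((hu x).sub_const (physPartial w t x R)).abs ?_
  filter_upwards [eventually_ge_atTop R] with R' hR'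
  rw [physPartial_eq_re_profileIntegral w t x (by linarith),
    physPartial_eq_re_profileIntegral w t x (by linarith), ← mul_sub, ← Complex.sub_re,
    ← hw.profileIntegral_add t x le_rfl (by linarith : 0 ≤ R) (by linarith), add_sub_cancel_left]
  exact (abs_inv_pi_mul_re_le _).trans (hw.norm_profileIntegral_tail_le hκ hκt hR hR' hx)

end MemE

lemma continuous_physPartial {w : ℝ → ℝ → ℂ} {T : ℝ → ℝ} {N : ℝ} (hT : Continuous T)
    (hw : ∀ s, MemE (w s)) (hN : ∀ s, profileNorm (w s) ≤ N)
    (hwc : ∀ p > 0, Continuous fun s => w s p) (R : ℝ) :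
    Continuous fun q : ℝ × ℝ => physPartial (w q.1) (T q.1) q.2 R := by
  refine continuous_const.mul (Complex.continuous_re.comp (continuous_of_dominated
    (bound := fun _ => N) (fun q => ?_) (fun q => ae_of_all _ fun p => ?_)
    (integrableOn_const (by simp)) ?_))
  · exact ((hw q.1).integrableOn_cexp_phase_mul (T q.1) q.2 R).aestronglyMeasurable
  · exact (norm_cexp_phase_mul (w q.1) (T q.1) q.2 p).trans_le
      (((hw q.1).norm_le_supN p).trans ((supN_le_profileNorm _).trans (hN q.1)))
  · filter_upwards [ae_restrict_mem measurableSet_Ioc] with p hp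
    exact Continuous.mul (by fun_prop) ((hwc p hp.1).comp continuous_fst)

lemma continuous_phys {w : ℝ → ℝ → ℂ} {T : ℝ → ℝ} {κ N : ℝ} (hT : Continuous T)
    (hw : ∀ s, MemE (w s)) (hN : ∀ s, profileNorm (w s) ≤ N) (hκ : 0 < κ) (hκT : ∀ s, κ ≤ T s)
    (hwc : ∀ p > 0, Continuous fun s => w s p) {u : ℝ → ℝ → ℝ}
    (hu : ∀ s, IsPhys (w s) (T s) (u s)) : Continuous fun q : ℝ × ℝ => u q.1 q.2 := by
  refine continuous_of_locally_uniform_approx_of_continuousAt fun q₀ U hU => ?_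
  obtain ⟨δ, hδ, hδU⟩ := Metric.mem_uniformity_dist.1 hU
  obtain ⟨R, hR1, hRx, hRδ⟩ : ∃ R : ℝ, 1 ≤ R ∧ |q₀.2| + 1 ≤ κ * R ^ 2 ∧ 4 * N / κ / R < δ := by
    have hsq : Tendsto (fun R : ℝ => κ * R ^ 2) atTop atTop :=
      (tendsto_pow_atTop two_ne_zero).const_mul_atTop hκ
    have hinv : Tendsto (fun R : ℝ => 4 * N / κ / R) atTop (𝓝 0) :=
      tendsto_const_nhds.div_atTop tendsto_id
    exact ((eventually_ge_atTop 1).and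
      ((hsq.eventually_ge_atTop _).and (hinv.eventually_lt_const hδ))).exists
  refine ⟨{q | |q.2| < |q₀.2| + 1}, ?_, fun q => physPartial (w q.1) (T q.1) q.2 R,
    (continuous_physPartial hT hw hN hwc R).continuousAt, fun q hq => hδU ?_⟩
  · exact (isOpen_lt (by fun_prop) continuous_const).mem_nhds (lt_add_one |q₀.2|)
  · rw [Real.dist_eq]
    refine ((hw q.1).abs_sub_physPartial_le hκ (hκT q.1) (hu q.1) hR1
      ((le_of_lt hq).trans hRx)).trans_lt (lt_of_le_of_lt ?_ hRδ)
    gcongr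
    exact hN q.1

/-! ### The energy weight -/

lemma jap_sq (x : ℝ) : jap x ^ 2 = 1 + x ^ 2 := Real.sq_sqrt (by positivity)

lemma one_le_jap (x : ℝ) : 1 ≤ jap x := Real.one_le_sqrt.2 (by nlinarith [sq_nonneg x])

lemma jap_pos (x : ℝ) : 0 < jap x := one_pos.trans_le (one_le_jap x)

lemma abs_lt_jap (x : ℝ) : |x| < jap x :=
  abs_lt_of_sq_lt_sq (by rw [jap_sq]; linarith) (jap_pos x).le

lemma abs_div_jap_le_one (x : ℝ) : |x / jap x| ≤ 1 := by
  rw [abs_div, abs_of_pos (jap_pos x), div_le_one (jap_pos x)]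
  exact (abs_lt_jap x).le

lemma inv_jap_pow_le_one (x : ℝ) (n : ℕ) : 1 / jap x ^ n ≤ 1 := by
  rw [div_le_one (pow_pos (jap_pos x) n)]
  exact one_le_pow₀ (one_le_jap x)

lemma continuous_jap : Continuous jap := by unfold jap; fun_prop

lemma hasDerivAt_jap (x : ℝ) : HasDerivAt jap (x / jap x) x := by
  have hsqrt := (((hasDerivAt_id x).pow 2).const_add 1).sqrt
    (by simp only [Pi.pow_apply, id_eq]; positivity)
  refine hsqrt.congr_deriv ?_
  have hjap := (jap_pos x).ne'
  simp only [jap] at *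
  simp only [id_eq, Pi.pow_apply, Nat.cast_ofNat, Nat.add_one_sub_one, pow_one, mul_one]
  field_simp

/-- The energy weight: it decays like `e^{2x}` at `-∞`, is bounded at `+∞`, and is increasing. -/
def weight (x : ℝ) : ℝ := Real.exp (x - jap x)

/-- The logarithmic derivative of `weight`. -/
def slope (x : ℝ) : ℝ := 1 - x / jap x

/-- The second derivative of `weight` divided by `weight`. -/
def slopeTwo (x : ℝ) : ℝ := -(1 / jap x ^ 3) + slope x ^ 2

/-- The third derivative of `weight` divided by `weight`. -/
def slopeThree (x : ℝ) : ℝ := 3 * x / jap x ^ 5 - 3 * slope x / jap x ^ 3 + slope x ^ 3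

lemma hasDerivAt_weight (x : ℝ) : HasDerivAt weight (slope x * weight x) x := by
  refine ((hasDerivAt_id x).sub (hasDerivAt_jap x)).exp.congr_deriv ?_
  simp [weight, slope, mul_comm]

lemma hasDerivAt_slope (x : ℝ) : HasDerivAt slope (-(1 / jap x ^ 3)) x := by
  have hjap := (jap_pos x).ne'
  refine (((hasDerivAt_id x).div (hasDerivAt_jap x) hjap).const_sub 1).congr_deriv ?_
  simp only [id]
  field_simp
  linear_combination (-1 : ℝ) * jap_sq x

lemma hasDerivAt_slope_mul_weight (x : ℝ) :
    HasDerivAt (fun x => slope x * weight x) (slopeTwo x * weight x) x :=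
  ((hasDerivAt_slope x).mul (hasDerivAt_weight x)).congr_deriv (by rw [slopeTwo]; ring)

lemma hasDerivAt_slopeTwo (x : ℝ) :
    HasDerivAt slopeTwo (3 * x / jap x ^ 5 - 2 * slope x / jap x ^ 3) x := by
  have hjap := (jap_pos x).ne'
  have hslopeTwo : slopeTwo = -(jap ^ 3)⁻¹ + slope ^ 2 := by
    ext y; simp [slopeTwo]
  rw [hslopeTwo]
  refine ((((hasDerivAt_jap x).pow 3).inv (pow_ne_zero 3 hjap)).neg.add
    ((hasDerivAt_slope x).pow 2)).congr_deriv ?_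
  simp only [Nat.cast_ofNat, Nat.add_one_sub_one, Pi.pow_apply, pow_one]
  field_simp
  ring

lemma hasDerivAt_slopeTwo_mul_weight (x : ℝ) :
    HasDerivAt (fun x => slopeTwo x * weight x) (slopeThree x * weight x) x :=
  ((hasDerivAt_slopeTwo x).mul (hasDerivAt_weight x)).congr_deriv
    (by rw [slopeTwo, slopeThree]; ring)

lemma continuous_weight : Continuous weight :=
  Real.continuous_exp.comp (continuous_id.sub continuous_jap)

lemma continuous_slope : Continuous slope :=
  continuous_iff_continuousAt.2 fun x => (hasDerivAt_slope x).continuousAt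

lemma continuous_slopeTwo : Continuous slopeTwo :=
  continuous_iff_continuousAt.2 fun x => (hasDerivAt_slopeTwo x).continuousAt

lemma continuous_slopeThree : Continuous slopeThree := by
  have hjap := continuous_jap
  have hslope := continuous_slope
  have hne : ∀ n : ℕ, ∀ x, jap x ^ n ≠ 0 := fun n x => pow_ne_zero n (jap_pos x).ne'
  unfold slopeThree
  fun_prop (disch := exact hne _)

lemma weight_pos (x : ℝ) : 0 < weight x := Real.exp_pos _

lemma weight_le_one (x : ℝ) : weight x ≤ 1 := by
  rw [weight, Real.exp_le_one_iff]
  linarith [(abs_lt.1 (abs_lt_jap x)).2]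

lemma weight_le_exp (x : ℝ) : weight x ≤ Real.exp x := by
  rw [weight, Real.exp_le_exp]; linarith [jap_pos x]

lemma slope_pos (x : ℝ) : 0 < slope x := by
  rw [slope, sub_pos, div_lt_one (jap_pos x)]
  exact (abs_lt.1 (abs_lt_jap x)).2

lemma slope_le_two (x : ℝ) : slope x ≤ 2 := by
  rw [slope]; linarith [(abs_le.1 (abs_div_jap_le_one x)).1]

lemma abs_slope_le (x : ℝ) : |slope x| ≤ 2 := by
  rw [abs_of_pos (slope_pos x)]; exact slope_le_two x

lemma slope_pow_three_le (x : ℝ) : slope x ^ 3 ≤ 8 :=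
  (pow_le_pow_left₀ (slope_pos x).le (slope_le_two x) 3).trans_eq (by norm_num)

lemma abs_slopeTwo_le (x : ℝ) : |slopeTwo x| ≤ 5 := by
  have hinv := inv_jap_pow_le_one x 3
  have hinv_pos : 0 < 1 / jap x ^ 3 := by have := jap_pos x; positivity
  have hslope := slope_pos x
  have hslope2 := slope_le_two x
  rw [slopeTwo, abs_le]
  constructor <;> nlinarith

lemma abs_slopeThree_le (x : ℝ) : |slopeThree x| ≤ 17 := by
  have hjap := jap_pos x
  have hslope := slope_pos x
  have hfirst : |3 * x / jap x ^ 5| ≤ 3 :=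
    calc |3 * x / jap x ^ 5| = 3 * |x / jap x| * (1 / jap x ^ 4) := by
          rw [← abs_of_pos (by positivity : 0 < 1 / jap x ^ 4), ← abs_of_pos (three_pos (α := ℝ)),
            ← abs_mul, ← abs_mul, abs_of_pos (three_pos (α := ℝ))]
          congr 1
          field_simp
      _ ≤ 3 * 1 * 1 := by
          gcongr
          exacts [abs_div_jap_le_one x, inv_jap_pow_le_one x 4]
      _ = 3 := by norm_num
  have hsecond : |3 * slope x / jap x ^ 3| ≤ 6 :=
    calc |3 * slope x / jap x ^ 3| = 3 * slope x * (1 / jap x ^ 3) := by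
          rw [abs_of_pos (by positivity)]; field_simp
      _ ≤ 3 * 2 * 1 := by
          gcongr
          exacts [slope_le_two x, inv_jap_pow_le_one x 3]
      _ = 6 := by norm_num
  have hthird : |slope x ^ 3| ≤ 8 := by
    rw [abs_of_pos (by positivity)]; exact slope_pow_three_le x
  calc |slopeThree x|
      ≤ |3 * x / jap x ^ 5| + |3 * slope x / jap x ^ 3| + |slope x ^ 3| :=
        (abs_add_le _ _).trans (add_le_add_left (abs_sub _ _) _)
    _ ≤ 17 := by linarith

lemma slope_eq_inv (x : ℝ) : slope x = 1 / (jap x * (jap x + x)) := by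
  have hjap := jap_pos x
  have hsum : 0 < jap x + x := by linarith [neg_abs_le x, abs_lt_jap x]
  rw [slope]
  field_simp
  linear_combination jap_sq x

lemma decay_pow_four_of_nonneg {x : ℝ} (hx : 0 ≤ x) : decay x ^ 4 = 1 / (1 + x) ^ 3 := by
  rw [decay, max_eq_left hx, ← Real.rpow_natCast, ← Real.rpow_mul (by positivity), one_div,
    ← Real.rpow_natCast, ← Real.rpow_neg (by positivity)]
  norm_num

lemma decay_pow_four_le (x : ℝ) : decay x ^ 4 ≤ 2 * slope x := by
  have hjap := jap_pos x
  rcases le_total x 0 with hx | hx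
  · have hdiv : x / jap x ≤ 0 := div_nonpos_of_nonpos_of_nonneg hx hjap.le
    have hdecay : decay x ^ 4 ≤ 1 := pow_le_one₀ (decay_pos x).le (decay_le_one x)
    rw [slope]; linarith
  · have hjap_le : jap x ≤ 1 + x := by
      apply le_of_sq_le_sq _ (by positivity)
      rw [jap_sq]; nlinarith
    rw [decay_pow_four_of_nonneg hx, slope_eq_inv, mul_one_div,
      div_le_div_iff₀ (by positivity) (by positivity), one_mul]
    calc jap x * (jap x + x) ≤ (1 + x) * (2 * (1 + x)) := by gcongr; linarith
      _ ≤ 2 * (1 + x) ^ 3 := by nlinarith [mul_nonneg hx (sq_nonneg (1 + x))]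

lemma decay_sq_le_rpow {x : ℝ} (hx : 0 < x) : decay x ^ 2 ≤ x ^ (-(3 / 2) : ℝ) := by
  rw [decay, max_eq_left hx.le, ← Real.rpow_natCast, ← Real.rpow_mul (by positivity),
    show -(3 / 4) * ((2 : ℕ) : ℝ) = -(3 / 2) by norm_num]
  exact Real.rpow_le_rpow_of_nonpos hx (by linarith) (by norm_num)

lemma integrable_decay_sq_mul_weight : Integrable fun x => decay x ^ 2 * weight x := by
  have hcont : Continuous fun x => decay x ^ 2 * weight x :=
    (continuous_decay.pow 2).mul continuous_weight
  have hnorm : ∀ x, ‖decay x ^ 2 * weight x‖ = decay x ^ 2 * weight x := fun x =>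
    Real.norm_of_nonneg (mul_nonneg (sq_nonneg _) (weight_pos x).le)
  rw [← integrableOn_univ, ← Iic_union_Ioi (a := (1 : ℝ))]
  refine IntegrableOn.union ?_ ?_
  · refine (integrableOn_exp_Iic 1).mono' hcont.aestronglyMeasurable (ae_of_all _ fun x => ?_)
    rw [hnorm]
    exact (mul_le_of_le_one_left (weight_pos x).le
      (pow_le_one₀ (decay_pos x).le (decay_le_one x))).trans (weight_le_exp x)
  · refine (integrableOn_Ioi_rpow_of_lt (a := -(3 / 2)) (by norm_num) one_pos).mono'
      hcont.aestronglyMeasurable ?_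
    filter_upwards [ae_restrict_mem measurableSet_Ioi] with x hx
    rw [hnorm]
    exact (mul_le_of_le_one_right (sq_nonneg _) (weight_le_one x)).trans
      (decay_sq_le_rpow (one_pos.trans hx))

lemma continuous_integral_of_abs_le {f : ℝ → ℝ → ℝ} {C : ℝ} (hx : ∀ s, Continuous (f s))
    (hs : ∀ x, Continuous fun s => f s x)
    (hf : ∀ s x, |f s x| ≤ C * (decay x ^ 2 * weight x)) :
    Continuous fun s => ∫ x, f s x :=
  continuous_of_dominated (fun s => (hx s).aestronglyMeasurable) (fun s => ae_of_all _ (hf s))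
    (integrable_decay_sq_mul_weight.const_mul C) (ae_of_all _ hs)

lemma integrable_of_abs_le {f : ℝ → ℝ} (hf : Continuous f) {C : ℝ}
    (hb : ∀ x, |f x| ≤ C * (decay x ^ 2 * weight x)) : Integrable f :=
  (integrable_decay_sq_mul_weight.const_mul C).mono' hf.aestronglyMeasurable (ae_of_all _ hb)

/-! ### Mollification -/

/-- A standard sequence of bump functions on the line shrinking to the origin. -/
def bumpSeq (n : ℕ) : ContDiffBump (0 : ℝ) where
  rIn := 1 / (2 * (n + 1))
  rOut := 1 / (n + 1)
  rIn_pos := by positivity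
  rIn_lt_rOut := one_div_lt_one_div_of_lt (by positivity)
    (by linarith [(by positivity : (0 : ℝ) < n + 1)])

/-- The mollifiers of unit mass associated with `bumpSeq`. -/
def mollifier (n : ℕ) : ℝ → ℝ := (bumpSeq n).normed volume

lemma tendsto_bumpSeq_rOut : Tendsto (fun n => (bumpSeq n).rOut) atTop (𝓝 0) :=
  tendsto_one_div_add_atTop_nhds_zero_nat

lemma tsupport_mollifier (n : ℕ) :
    tsupport (mollifier n) = Metric.closedBall 0 (bumpSeq n).rOut :=
  (bumpSeq n).tsupport_normed_eq

lemma integral_abs_mollifier (n : ℕ) : ∫ x, |mollifier n x| = 1 := by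
  rw [← (bumpSeq n).integral_normed (μ := volume)]
  exact integral_congr_ae (ae_of_all _ fun x => abs_of_nonneg ((bumpSeq n).nonneg_normed x))

lemma tendsto_mollifier_convolution {f : ℝ → ℝ} (hf : Continuous f) (x : ℝ) :
    Tendsto (fun n => (mollifier n ⋆ f) x) atTop (𝓝 (f x)) :=
  ContDiffBump.convolution_tendsto_right_of_continuous tendsto_bumpSeq_rOut hf x

lemma tendstoLocallyUniformly_mollifier_convolution {f : ℝ → ℝ} (hf : Continuous f) :
    TendstoLocallyUniformly (fun n => mollifier n ⋆ f) f atTop := by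
  refine tendstoLocallyUniformly_iff_forall_tendsto.2 fun x => ?_
  have hconv : Tendsto (fun y : ℕ × ℝ => (mollifier y.1 ⋆ f) y.2) (atTop ×ˢ 𝓝 x) (𝓝 (f x)) :=
    ContDiffBump.convolution_tendsto_right (φ := fun y : ℕ × ℝ => bumpSeq y.1) (g := fun _ => f)
      (tendsto_bumpSeq_rOut.comp tendsto_fst)
      (Eventually.of_forall fun _ => hf.aestronglyMeasurable)
      ((hf.tendsto x).comp tendsto_snd) tendsto_snd
  exact (((hf.tendsto x).comp tendsto_snd).prodMk_nhds hconv).mono_right (nhds_le_uniformity _)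

/-- Smooth convolution kernels supported in `[-1, 1]`. -/
structure IsKernel (k : ℝ → ℝ) : Prop where
  contDiff : ContDiff ℝ ∞ k
  tsupport_subset : tsupport k ⊆ Metric.closedBall 0 1

namespace IsKernel

variable {k f : ℝ → ℝ}

lemma mollifier (n : ℕ) : IsKernel (mollifier n) where
  contDiff := (bumpSeq n).contDiff_normed
  tsupport_subset := by
    rw [tsupport_mollifier]
    refine Metric.closedBall_subset_closedBall ?_
    rw [bumpSeq, div_le_one (by positivity)]
    linarith [(Nat.cast_nonneg n : (0 : ℝ) ≤ n)]

lemma deriv (hk : IsKernel k) : IsKernel (deriv k) where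
  contDiff := (contDiff_infty_iff_deriv.1 hk.contDiff).2
  tsupport_subset := tsupport_deriv_subset.trans hk.tsupport_subset

lemma hasCompactSupport (hk : IsKernel k) : HasCompactSupport k :=
  HasCompactSupport.of_support_subset_isCompact (isCompact_closedBall 0 1)
    ((subset_tsupport k).trans hk.tsupport_subset)

lemma integrable (hk : IsKernel k) : Integrable k :=
  hk.contDiff.continuous.integrable_of_hasCompactSupport hk.hasCompactSupport

lemma eq_zero (hk : IsKernel k) {x : ℝ} (hx : 1 < |x|) : k x = 0 := by
  refine image_eq_zero_of_notMem_tsupport fun hmem => hx.not_ge ?_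
  simpa using hk.tsupport_subset hmem

lemma contDiff_comp_sub (hk : IsKernel k) (x : ℝ) : ContDiff ℝ ∞ fun y => k (x - y) :=
  hk.contDiff.comp (contDiff_const.sub contDiff_id)

lemma hasCompactSupport_comp_sub (hk : IsKernel k) (x : ℝ) :
    HasCompactSupport fun y => k (x - y) :=
  hk.hasCompactSupport.comp_homeomorph (Homeomorph.subLeft x)

lemma deriv_comp_sub (k : ℝ → ℝ) (x : ℝ) :
    (_root_.deriv fun y => k (x - y)) = fun y => -_root_.deriv k (x - y) :=
  funext fun y => deriv_comp_const_sub k x y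

lemma integrable_comp_sub_mul (hk : IsKernel k) (hf : Continuous f) (x : ℝ) :
    Integrable fun y => k (x - y) * f y :=
  ((hk.contDiff_comp_sub x).continuous.mul hf).integrable_of_hasCompactSupport
    (hk.hasCompactSupport_comp_sub x).mul_right

lemma hasDerivAt_convolution (hk : IsKernel k) (hf : Continuous f) (x : ℝ) :
    HasDerivAt (k ⋆ f) ((_root_.deriv k ⋆ f) x) x :=
  hk.hasCompactSupport.hasDerivAt_convolution_left _ (hk.contDiff.of_le (by simp))
    hf.locallyIntegrable x

lemma continuous_convolution (hk : IsKernel k) (hf : Continuous f) : Continuous (k ⋆ f) :=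
  continuous_iff_continuousAt.2 fun x => (hk.hasDerivAt_convolution hf x).continuousAt

lemma abs_convolution_le_decay_pow (hk : IsKernel k) {K : ℝ} (n : ℕ)
    (hf : ∀ y, |f y| ≤ K * decay y ^ n) (x : ℝ) :
    |(k ⋆ f) x| ≤ (∫ y, |k y|) * (2 ^ n * K) * decay x ^ n := by
  have hK : 0 ≤ K :=
    nonneg_of_mul_nonneg_left ((abs_nonneg _).trans (hf 0)) (pow_pos (decay_pos 0) n)
  have hpoint : ∀ y, ‖k y • f (x - y)‖ ≤ |k y| * (2 ^ n * K * decay x ^ n) := fun y => by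
    rw [smul_eq_mul, norm_mul, Real.norm_eq_abs, Real.norm_eq_abs]
    rcases le_or_gt |y| 1 with hy | hy
    · refine mul_le_mul_of_nonneg_left ((hf _).trans ?_) (abs_nonneg _)
      calc K * decay (x - y) ^ n ≤ K * (2 * decay x) ^ n := by
            gcongr
            exacts [(decay_pos _).le, decay_le_of_abs_sub_le_one (by simpa using hy)]
        _ = 2 ^ n * K * decay x ^ n := by ring
    · simp [hk.eq_zero hy]
  have hnorm_le := norm_integral_le_of_norm_le (hk.integrable.abs.mul_const _) (ae_of_all _ hpoint)
  rwa [integral_mul_const, ← mul_assoc] at hnorm_le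

lemma continuous_convolution_param (hk : IsKernel k) {f : ℝ → ℝ → ℝ} {K : ℝ}
    (hf : Continuous fun q : ℝ × ℝ => f q.1 q.2) (hb : ∀ t y, |f t y| ≤ K) (x : ℝ) :
    Continuous fun t => (k ⋆ f t) x := by
  have hk_cont := hk.contDiff.continuous
  refine continuous_of_dominated (bound := fun y => |k y| * K)
    (fun t => ?_) (fun t => ae_of_all _ fun y => ?_) (hk.integrable.abs.mul_const K)
    (ae_of_all _ fun y => ?_)
  · exact (hk_cont.mul (hf.comp (by fun_prop :
      Continuous fun y => (t, x - y)))).aestronglyMeasurable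
  · simpa [abs_mul] using mul_le_mul_of_nonneg_left (hb t (x - y)) (abs_nonneg (k y))
  · exact continuous_const.mul (hf.comp (by fun_prop : Continuous fun t => (t, x - y)))

end IsKernel

lemma tsupport_mollifier_comp_sub_subset (n : ℕ) (t : ℝ) :
    tsupport (fun s => mollifier n (t - s)) ⊆ Metric.closedBall t (bumpSeq n).rOut := by
  refine closure_minimal (fun s hs => ?_) Metric.isClosed_closedBall
  have hmem : t - s ∈ tsupport (mollifier n) := subset_tsupport _ hs
  rw [tsupport_mollifier, mem_closedBall_zero_iff] at hmem
  rwa [Metric.mem_closedBall, dist_comm, Real.dist_eq]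

-- Mollifying turns the weak equation `A' = B` into a classical one away from the boundary, and the
-- mollified derivatives converge locally uniformly.
lemma hasDerivAt_of_integral_deriv_mul_add_eq_zero {A B : ℝ → ℝ} {U : Set ℝ} (hU : IsOpen U)
    (hA : Continuous A) (hB : Continuous B)
    (hAB : ∀ η : ℝ → ℝ, ContDiff ℝ ∞ η → HasCompactSupport η → tsupport η ⊆ U →
      ∫ s, (deriv η s * A s + η s * B s) = 0) {t : ℝ} (ht : t ∈ U) :
    HasDerivAt A (B t) t := by
  obtain ⟨δ, hδ, hball⟩ := Metric.isOpen_iff.1 hU t ht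
  refine hasDerivAt_of_tendstoLocallyUniformlyOn Metric.isOpen_ball
    (tendstoLocallyUniformly_mollifier_convolution hB).tendstoLocallyUniformlyOn ?_
    (fun s _ => tendsto_mollifier_convolution hA s) (Metric.mem_ball_self (half_pos hδ))
  filter_upwards [tendsto_bumpSeq_rOut.eventually_lt_const (half_pos hδ)] with n hn s hs
  have hk := IsKernel.mollifier n
  refine (hk.hasDerivAt_convolution hA s).congr_deriv ?_
  have htest := hAB _ (hk.contDiff_comp_sub s) (hk.hasCompactSupport_comp_sub s)
    ((tsupport_mollifier_comp_sub_subset n s).trans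
      ((Metric.closedBall_subset_ball' (by linarith [Metric.mem_ball.1 hs])).trans hball))
  simp only [IsKernel.deriv_comp_sub, neg_mul, neg_add_eq_sub] at htest
  rw [integral_sub (hk.integrable_comp_sub_mul hB s) (hk.deriv.integrable_comp_sub_mul hA s),
    sub_eq_zero] at htest
  simpa only [convolution_lsmul_swap, smul_eq_mul] using htest.symm

/-! ### The Kato identity -/

/-- Continuous functions bounded by a multiple of `decay`. -/
structure IsDecaying (f : ℝ → ℝ) : Prop where
  continuous : Continuous f
  exists_le : ∃ C, ∀ x, |f x| ≤ C * decay x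

lemma abs_mul_mul_weight_le {a b A B x : ℝ} (ha : |a| ≤ A * decay x) (hb : |b| ≤ B * decay x) :
    |a * b * weight x| ≤ A * B * (decay x ^ 2 * weight x) := by
  rw [abs_mul, abs_mul, abs_of_pos (weight_pos x)]
  calc |a| * |b| * weight x ≤ A * decay x * (B * decay x) * weight x := by
        gcongr
        exacts [(weight_pos x).le, (abs_nonneg a).trans ha]
    _ = A * B * (decay x ^ 2 * weight x) := by ring

namespace IsDecaying

variable {f g s : ℝ → ℝ}

lemma integrable_mul_mul_weight (hf : IsDecaying f) (hg : IsDecaying g) :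
    Integrable fun x => f x * g x * weight x := by
  obtain ⟨A, hA⟩ := hf.exists_le
  obtain ⟨B, hB⟩ := hg.exists_le
  exact integrable_of_abs_le ((hf.continuous.mul hg.continuous).mul continuous_weight) fun x =>
    abs_mul_mul_weight_le (hA x) (hB x)

lemma mul_of_abs_le (hf : IsDecaying f) (hs : Continuous s) {S : ℝ} (hS : ∀ x, |s x| ≤ S) :
    IsDecaying fun x => f x * s x where
  continuous := hf.continuous.mul hs
  exists_le := by
    obtain ⟨A, hA⟩ := hf.exists_le
    refine ⟨A * S, fun x => ?_⟩
    rw [abs_mul]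
    calc |f x| * |s x| ≤ A * decay x * S := by
          gcongr
          exacts [(abs_nonneg _).trans (hA x), hA x, hS x]
      _ = A * S * decay x := by ring

lemma integrable_mul_mul_mul_weight (hf : IsDecaying f) (hg : IsDecaying g) (hs : Continuous s)
    {S : ℝ} (hS : ∀ x, |s x| ≤ S) : Integrable fun x => f x * g x * (s x * weight x) := by
  simpa only [mul_assoc] using hf.integrable_mul_mul_weight (hg.mul_of_abs_le hs hS)

end IsDecaying

/-- The weighted energy `∫ f² e^{x - ⟨x⟩}`. -/
def energy (f : ℝ → ℝ) : ℝ := ∫ x, f x ^ 2 * weight x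

lemma energy_nonneg (f : ℝ → ℝ) : 0 ≤ energy f :=
  integral_nonneg fun x => mul_nonneg (sq_nonneg _) (weight_pos x).le

lemma IsDecaying.integrable_sq_mul_weight {f : ℝ → ℝ} (hf : IsDecaying f) :
    Integrable fun x => f x ^ 2 * weight x := by
  simpa only [sq] using hf.integrable_mul_mul_weight hf

lemma IsDecaying.eq_zero_of_energy_eq_zero {f : ℝ → ℝ} (hf : IsDecaying f) (h : energy f = 0) :
    f = 0 := by
  have hcont : Continuous fun x => f x ^ 2 * weight x :=
    (hf.continuous.pow 2).mul continuous_weight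
  have hae := (integral_eq_zero_iff_of_nonneg
    (fun x => mul_nonneg (sq_nonneg _) (weight_pos x).le) hf.integrable_sq_mul_weight).1 h
  ext x
  have hzero : f x ^ 2 * weight x = 0 :=
    congrFun ((hcont.ae_eq_iff_eq volume continuous_const).1 hae) x
  simpa [(weight_pos x).ne'] using hzero

lemma abs_sq_mul_weight_le {a A x : ℝ} (ha : |a| ≤ A * decay x) :
    |a ^ 2 * weight x| ≤ A * A * (decay x ^ 2 * weight x) := by
  rw [sq a]; exact abs_mul_mul_weight_le ha ha

lemma continuous_energy {u : ℝ → ℝ → ℝ} {A : ℝ} (hx : ∀ s, Continuous (u s))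
    (hs : ∀ x, Continuous fun s => u s x) (hA : ∀ s x, |u s x| ≤ A * decay x) :
    Continuous fun s => energy (u s) :=
  continuous_integral_of_abs_le (fun s => ((hx s).pow 2).mul continuous_weight)
    (fun x => ((hs x).pow 2).mul continuous_const) fun s x => abs_sq_mul_weight_le (hA s x)

lemma hasDerivAt_energy {u v : ℝ → ℝ → ℝ} {A B s : ℝ} {U : Set ℝ} (hU : U ∈ 𝓝 s)
    (hu : ∀ r, Continuous (u r)) (hv : Continuous (v s)) (hA : ∀ r x, |u r x| ≤ A * decay x)
    (hB : ∀ r x, |v r x| ≤ B * decay x)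
    (huv : ∀ r ∈ U, ∀ x, HasDerivAt (fun r => u r x) (v r x) r) :
    HasDerivAt (fun r => energy (u r)) (∫ x, 2 * (u s x * v s x * weight x)) s := by
  have hmeas : ∀ r, Continuous fun x => u r x ^ 2 * weight x := fun r =>
    ((hu r).pow 2).mul continuous_weight
  refine (hasDerivAt_integral_of_dominated_loc_of_deriv_le (F' := fun r x => 2 *
      (u r x * v r x * weight x)) (bound := fun x => 2 * (A * B * (decay x ^ 2 * weight x)))
    hU (Eventually.of_forall fun r => (hmeas r).aestronglyMeasurable)
    (integrable_of_abs_le (hmeas s) fun x => abs_sq_mul_weight_le (hA s x))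
    (continuous_const.mul (((hu s).mul hv).mul continuous_weight)).aestronglyMeasurable
    (ae_of_all _ fun x r _ => ?_) ((integrable_decay_sq_mul_weight.const_mul _).const_mul 2)
    (ae_of_all _ fun x r hr => ?_)).2
  · rw [norm_mul, Real.norm_two, Real.norm_eq_abs]
    exact mul_le_mul_of_nonneg_left (abs_mul_mul_weight_le (hA r x) (hB r x)) zero_le_two
  · exact (((huv r hr x).pow 2).mul_const (weight x)).congr_deriv (by ring)

/-- The flux of the density `u²ψ` along `∂ₜu + ∂ₓ³u + ∂ₓG = 0`; here `uᵢ` and `ψᵢ` stand for the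
`i`-th derivatives of `u` and `ψ`. -/
def katoFlux (ψ ψ₁ ψ₂ u u₁ u₂ G : ℝ → ℝ) (x : ℝ) : ℝ :=
  -2 * (u x * u₂ x * ψ x) + u₁ x * u₁ x * ψ x + 2 * (u x * u₁ x * ψ₁ x)
    - u x * u x * ψ₂ x - 2 * (u x * G x * ψ x)

/-- The production term in Kato's identity for the density `u²ψ` along `∂ₜu + ∂ₓ³u + ∂ₓG = 0`, with
the subscript conventions of `katoFlux`. -/
def katoSource (ψ ψ₁ ψ₃ u u₁ G : ℝ → ℝ) (x : ℝ) : ℝ :=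
  -3 * (u₁ x * u₁ x * ψ₁ x) + u x * u x * ψ₃ x + 2 * (u₁ x * G x * ψ x) + 2 * (u x * G x * ψ₁ x)

lemma hasDerivAt_katoFlux {ψ ψ₁ ψ₂ ψ₃ u u₁ u₂ u₃ G G₁ : ℝ → ℝ} {x : ℝ}
    (hψ : HasDerivAt ψ (ψ₁ x) x) (hψ₁ : HasDerivAt ψ₁ (ψ₂ x) x) (hψ₂ : HasDerivAt ψ₂ (ψ₃ x) x)
    (hu : HasDerivAt u (u₁ x) x) (hu₁ : HasDerivAt u₁ (u₂ x) x) (hu₂ : HasDerivAt u₂ (u₃ x) x)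
    (hG : HasDerivAt G (G₁ x) x) :
    HasDerivAt (katoFlux ψ ψ₁ ψ₂ u u₁ u₂ G)
      (2 * (u x * (-u₃ x - G₁ x) * ψ x) - katoSource ψ ψ₁ ψ₃ u u₁ G x) x := by
  refine ((((((hu.mul hu₂).mul hψ).const_mul (-2)).add ((hu₁.mul hu₁).mul hψ)).add
    (((hu.mul hu₁).mul hψ₁).const_mul 2)).sub ((hu.mul hu).mul hψ₂)).sub
    (((hu.mul hG).mul hψ).const_mul 2) |>.congr_deriv ?_
  simp only [katoSource, Pi.mul_apply]
  ring

/-- The density which dominates the Kato production term for the weight `weight`, for a solution `a`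
with source `b`. -/
def energyDensity (a b : ℝ → ℝ) (x : ℝ) : ℝ :=
  (18 * a x ^ 2 + 9 * (b x ^ 2 / slope x)) * weight x

lemma continuous_energyDensity {a b : ℝ → ℝ} (ha : Continuous a) (hb : Continuous b) :
    Continuous (energyDensity a b) := by
  have hweight := continuous_weight
  have hslope := continuous_slope
  unfold energyDensity
  fun_prop (disch := exact fun x => (slope_pos x).ne')

lemma abs_energyDensity_le {a b : ℝ → ℝ} {A B x : ℝ}
    (ha : |a x| ≤ A * decay x) (hb : |b x| ≤ B * decay x ^ 3) :
    |energyDensity a b x| ≤ (18 * A ^ 2 + 18 * B ^ 2) * (decay x ^ 2 * weight x) := by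
  have hslope := slope_pos x
  have hweight := weight_pos x
  have ha_sq : a x ^ 2 ≤ A ^ 2 * decay x ^ 2 := by
    rw [← mul_pow, ← sq_abs]
    gcongr
  have hb_sq : b x ^ 2 / slope x ≤ 2 * B ^ 2 * decay x ^ 2 := by
    rw [div_le_iff₀ hslope]
    calc b x ^ 2 ≤ (B * decay x ^ 3) ^ 2 := by rw [← sq_abs]; gcongr
      _ = B ^ 2 * decay x ^ 2 * decay x ^ 4 := by ring
      _ ≤ B ^ 2 * decay x ^ 2 * (2 * slope x) := by gcongr; exact decay_pow_four_le x
      _ = 2 * B ^ 2 * decay x ^ 2 * slope x := by ring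
  rw [energyDensity, abs_of_nonneg (by positivity)]
  calc (18 * a x ^ 2 + 9 * (b x ^ 2 / slope x)) * weight x
      ≤ (18 * (A ^ 2 * decay x ^ 2) + 9 * (2 * B ^ 2 * decay x ^ 2)) * weight x := by gcongr
    _ = (18 * A ^ 2 + 18 * B ^ 2) * (decay x ^ 2 * weight x) := by ring

lemma energyDensity_le {a b : ℝ → ℝ} {L x : ℝ} (hb : |b x| ≤ L * decay x ^ 2 * |a x|) :
    energyDensity a b x ≤ (18 + 18 * L ^ 2) * (a x ^ 2 * weight x) := by
  have hslope := slope_pos x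
  have hweight := weight_pos x
  have hb_sq : b x ^ 2 / slope x ≤ 2 * L ^ 2 * a x ^ 2 := by
    rw [div_le_iff₀ hslope]
    calc b x ^ 2 ≤ (L * decay x ^ 2 * |a x|) ^ 2 := by rw [← sq_abs (b x)]; gcongr
      _ = L ^ 2 * a x ^ 2 * decay x ^ 4 := by rw [mul_pow, sq_abs]; ring
      _ ≤ L ^ 2 * a x ^ 2 * (2 * slope x) := by gcongr; exact decay_pow_four_le x
      _ = 2 * L ^ 2 * a x ^ 2 * slope x := by ring
  calc energyDensity a b x ≤ (18 * a x ^ 2 + 9 * (2 * L ^ 2 * a x ^ 2)) * weight x := by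
        rw [energyDensity]; gcongr
    _ = (18 + 18 * L ^ 2) * (a x ^ 2 * weight x) := by ring

-- The negative term `-3 b² σ` is the Kato smoothing effect; it absorbs `2 b g`.
lemma kato_production_le {a b g σ θ : ℝ} (hσ : 0 < σ) (hσ3 : σ ^ 3 ≤ 8) (hθ : θ ≤ 17) :
    -3 * b ^ 2 * σ + a ^ 2 * θ + 2 * b * g + 2 * a * g * σ ≤ 18 * a ^ 2 + 9 * (g ^ 2 / σ) := by
  obtain ⟨z, rfl⟩ : ∃ z, g = σ * z := ⟨g / σ, by field_simp⟩
  have hsmoothing : 2 * b * (σ * z) ≤ 3 * b ^ 2 * σ + σ * z ^ 2 := by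
    nlinarith [mul_nonneg hσ.le (sq_nonneg (b - z)), mul_nonneg hσ.le (sq_nonneg b)]
  have hcross : 2 * a * (σ * z) * σ ≤ a ^ 2 + 8 * (σ * z ^ 2) := by
    nlinarith [sq_nonneg (a - σ ^ 2 * z),
      mul_nonneg (sub_nonneg.2 hσ3) (mul_nonneg hσ.le (sq_nonneg z))]
  have hθ_mul : a ^ 2 * θ ≤ a ^ 2 * 17 := by gcongr
  have hdiv : (σ * z) ^ 2 / σ = σ * z ^ 2 := by field_simp
  linarith

/-- `katoSource` for the weight `weight` and its derivatives. -/
abbrev weightSource (u u₁ G : ℝ → ℝ) : ℝ → ℝ :=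
  katoSource weight (fun x => slope x * weight x) (fun x => slopeThree x * weight x) u u₁ G

lemma weightSource_le_energyDensity (u u₁ G : ℝ → ℝ) (x : ℝ) :
    weightSource u u₁ G x ≤ energyDensity u G x := by
  have hproduction := kato_production_le (a := u x) (b := u₁ x) (g := G x) (slope_pos x)
    (slope_pow_three_le x) (abs_le.1 (abs_slopeThree_le x)).2
  calc weightSource u u₁ G x
      = (-3 * u₁ x ^ 2 * slope x + u x ^ 2 * slopeThree x + 2 * u₁ x * G x
          + 2 * u x * G x * slope x) * weight x := by rw [weightSource, katoSource]; ring
    _ ≤ energyDensity u G x := mul_le_mul_of_nonneg_right hproduction (weight_pos x).le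

section KatoIdentity

variable {u u₁ u₂ u₃ G G₁ : ℝ → ℝ}

lemma integrable_katoFlux_weight (hu : IsDecaying u) (hu₁ : IsDecaying u₁) (hu₂ : IsDecaying u₂)
    (hG : IsDecaying G) :
    Integrable (katoFlux weight (fun x => slope x * weight x) (fun x => slopeTwo x * weight x)
      u u₁ u₂ G) :=
  (((((hu.integrable_mul_mul_weight hu₂).const_mul (-2)).add
    (hu₁.integrable_mul_mul_weight hu₁)).add
    ((hu.integrable_mul_mul_mul_weight hu₁ continuous_slope abs_slope_le).const_mul 2)).sub
    (hu.integrable_mul_mul_mul_weight hu continuous_slopeTwo abs_slopeTwo_le)).sub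
    ((hu.integrable_mul_mul_weight hG).const_mul 2)

lemma integrable_weightSource (hu : IsDecaying u) (hu₁ : IsDecaying u₁) (hG : IsDecaying G) :
    Integrable (weightSource u u₁ G) :=
  ((((hu₁.integrable_mul_mul_mul_weight hu₁ continuous_slope abs_slope_le).const_mul (-3)).add
    (hu.integrable_mul_mul_mul_weight hu continuous_slopeThree abs_slopeThree_le)).add
    ((hu₁.integrable_mul_mul_weight hG).const_mul 2)).add
    ((hu.integrable_mul_mul_mul_weight hG continuous_slope abs_slope_le).const_mul 2)

lemma integrable_two_mul_mul_neg_sub_mul_weight (hu : IsDecaying u) (hu₃ : IsDecaying u₃)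
    (hG₁ : IsDecaying G₁) : Integrable fun x => 2 * (u x * (-u₃ x - G₁ x) * weight x) := by
  refine (((hu.integrable_mul_mul_weight hu₃).add
    (hu.integrable_mul_mul_weight hG₁)).const_mul (-2)).congr (ae_of_all _ fun x => ?_)
  simp only [Pi.add_apply]
  ring

lemma integral_two_mul_mul_neg_sub_mul_weight_eq (hu : IsDecaying u) (hu₁ : IsDecaying u₁)
    (hu₂ : IsDecaying u₂) (hu₃ : IsDecaying u₃) (hG : IsDecaying G) (hG₁ : IsDecaying G₁)
    (du : ∀ x, HasDerivAt u (u₁ x) x) (du₁ : ∀ x, HasDerivAt u₁ (u₂ x) x)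
    (du₂ : ∀ x, HasDerivAt u₂ (u₃ x) x) (dG : ∀ x, HasDerivAt G (G₁ x) x) :
    ∫ x, 2 * (u x * (-u₃ x - G₁ x) * weight x) = ∫ x, weightSource u u₁ G x := by
  have hrate := integrable_two_mul_mul_neg_sub_mul_weight hu hu₃ hG₁
  have hsource := integrable_weightSource hu hu₁ hG
  rw [← sub_eq_zero, ← integral_sub hrate hsource]
  exact integral_eq_zero_of_hasDerivAt_of_integrable
    (fun x => hasDerivAt_katoFlux (hasDerivAt_weight x) (hasDerivAt_slope_mul_weight x)
      (hasDerivAt_slopeTwo_mul_weight x) (du x) (du₁ x) (du₂ x) (dG x))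
    (hrate.sub hsource) (integrable_katoFlux_weight hu hu₁ hu₂ hG)

end KatoIdentity

/-! ### Weak solutions of the Airy equation with source -/

section EnergyLimits

variable {a b : ℕ → ℝ → ℝ} {a' b' : ℝ → ℝ} {A B : ℝ}

lemma tendsto_energy (ha : ∀ n, Continuous (a n)) (hA : ∀ n x, |a n x| ≤ A * decay x)
    (hlim : ∀ x, Tendsto (fun n => a n x) atTop (𝓝 (a' x))) :
    Tendsto (fun n => energy (a n)) atTop (𝓝 (energy a')) :=
  tendsto_integral_of_dominated_convergence _
    (fun n => (((ha n).pow 2).mul continuous_weight).aestronglyMeasurable)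
    (integrable_decay_sq_mul_weight.const_mul _)
    (fun n => ae_of_all _ fun x => abs_sq_mul_weight_le (hA n x))
    (ae_of_all _ fun x => ((hlim x).pow 2).mul_const _)

lemma tendsto_integral_energyDensity (ha : ∀ n, Continuous (a n)) (hb : ∀ n, Continuous (b n))
    (hA : ∀ n x, |a n x| ≤ A * decay x) (hB : ∀ n x, |b n x| ≤ B * decay x ^ 3)
    (hlima : ∀ x, Tendsto (fun n => a n x) atTop (𝓝 (a' x)))
    (hlimb : ∀ x, Tendsto (fun n => b n x) atTop (𝓝 (b' x))) :
    Tendsto (fun n => ∫ x, energyDensity (a n) (b n) x) atTop (𝓝 (∫ x, energyDensity a' b' x)) :=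
  tendsto_integral_of_dominated_convergence _
    (fun n => (continuous_energyDensity (ha n) (hb n)).aestronglyMeasurable)
    (integrable_decay_sq_mul_weight.const_mul _)
    (fun n => ae_of_all _ fun x => abs_energyDensity_le (hA n x) (hB n x))
    (ae_of_all _ fun x => ((((hlima x).pow 2).const_mul 18).add
      ((((hlimb x).pow 2).div_const _).const_mul 9)).mul_const _)

end EnergyLimits

lemma continuous_integral_energyDensity {a b : ℝ → ℝ → ℝ} {A B : ℝ}
    (ha : ∀ s, Continuous (a s)) (hb : ∀ s, Continuous (b s))
    (ha_time : ∀ x, Continuous fun s => a s x) (hb_time : ∀ x, Continuous fun s => b s x)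
    (hA : ∀ s x, |a s x| ≤ A * decay x) (hB : ∀ s x, |b s x| ≤ B * decay x ^ 3) :
    Continuous fun s => ∫ x, energyDensity (a s) (b s) x :=
  continuous_integral_of_abs_le (fun s => continuous_energyDensity (ha s) (hb s))
    (fun x => ((((ha_time x).pow 2).const_mul 18).add
      ((((hb_time x).pow 2).div_const _).const_mul 9)).mul_const _)
    fun s x => abs_energyDensity_le (hA s x) (hB s x)

lemma eq_zero_of_le_mul_integral {f : ℝ → ℝ} {a b C : ℝ} (hf : Continuous f)
    (hf_nonneg : ∀ s ∈ Icc a b, 0 ≤ f s)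
    (hf_le : ∀ s ∈ Icc a b, f s ≤ C * ∫ r in a..s, f r) {t : ℝ} (ht : t ∈ Icc a b) : f t = 0 := by
  have hprimitive : ∀ s, HasDerivAt (fun s => ∫ r in a..s, f r) (f s) s := fun s =>
    (hf.integral_hasStrictDerivAt a s).hasDerivAt
  have hprimitive_nonneg : ∀ s ∈ Icc a b, 0 ≤ ∫ r in a..s, f r := fun s hs =>
    intervalIntegral.integral_nonneg hs.1 fun r hr => hf_nonneg r ⟨hr.1, hr.2.trans hs.2⟩
  have hgronwall := norm_le_gronwallBound_of_norm_deriv_right_le (δ := 0) (K := C) (ε := 0)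
    (fun s _ => (hprimitive s).continuousAt.continuousWithinAt)
    (fun s _ => (hprimitive s).hasDerivWithinAt) (by simp)
    (fun s hs => by
      have hs' := Ico_subset_Icc_self hs
      simpa [Real.norm_of_nonneg (hf_nonneg s hs'), Real.norm_of_nonneg (hprimitive_nonneg s hs')]
        using hf_le s hs') t ht
  have hzero : ∫ r in a..t, f r = 0 := by simpa [gronwallBound_ε0_δ0] using hgronwall
  exact le_antisymm (by simpa [hzero] using hf_le t ht) (hf_nonneg t ht)

section TestFunctions

variable {η h f g : ℝ → ℝ} {w F : ℝ → ℝ → ℝ}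

lemma integrable_mul_mul_of_hasCompactSupport (hf : Continuous f) (hf_compact : HasCompactSupport f)
    (hg : Continuous g) (hg_compact : HasCompactSupport g)
    (hw : Continuous fun q : ℝ × ℝ => w q.1 q.2) :
    Integrable fun q : ℝ × ℝ => f q.1 * g q.2 * w q.1 q.2 := by
  have hcont : Continuous fun q : ℝ × ℝ => f q.1 * g q.2 * w q.1 q.2 := by fun_prop
  refine hcont.integrable_of_hasCompactSupport (HasCompactSupport.intro
    (hf_compact.isCompact.prod hg_compact.isCompact) fun q hq => ?_)
  rcases not_and_or.1 hq with hq | hq <;> simp [image_eq_zero_of_notMem_tsupport hq]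

/-- The integrand obtained by testing `∂ₜw + ∂ₓ³w + ∂ₓF` against the tensor product `η(t)h(x)`,
up to an overall sign. -/
def testPairing (η h : ℝ → ℝ) (w F : ℝ → ℝ → ℝ) (q : ℝ × ℝ) : ℝ :=
  deriv η q.1 * h q.2 * w q.1 q.2 +
    (η q.1 * deriv (deriv (deriv h)) q.2 * w q.1 q.2 + η q.1 * deriv h q.2 * F q.1 q.2)

lemma integrable_testPairing (hη : ContDiff ℝ ∞ η) (hη_compact : HasCompactSupport η)
    (hh : ContDiff ℝ ∞ h) (hh_compact : HasCompactSupport h)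
    (hw : Continuous fun q : ℝ × ℝ => w q.1 q.2) (hF : Continuous fun q : ℝ × ℝ => F q.1 q.2) :
    Integrable (testPairing η h w F) := by
  have hη' := hη.continuous_deriv (by simp)
  have hh₁ := (contDiff_infty_iff_deriv.1 hh).2
  have hh₂ := (contDiff_infty_iff_deriv.1 hh₁).2
  exact (integrable_mul_mul_of_hasCompactSupport hη' hη_compact.deriv hh.continuous hh_compact
    hw).add ((integrable_mul_mul_of_hasCompactSupport hη.continuous hη_compact
      (hh₂.continuous_deriv (by simp)) hh_compact.deriv.deriv.deriv hw).add
    (integrable_mul_mul_of_hasCompactSupport hη.continuous hη_compact hh₁.continuous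
      hh_compact.deriv hF))

lemma integral_testPairing (hη : ContDiff ℝ ∞ η) (hη_compact : HasCompactSupport η)
    (hh : ContDiff ℝ ∞ h) (hh_compact : HasCompactSupport h)
    (hw : Continuous fun q : ℝ × ℝ => w q.1 q.2) (hF : Continuous fun q : ℝ × ℝ => F q.1 q.2) :
    ∫ q, testPairing η h w F q = ∫ s, (deriv η s * (∫ y, h y * w s y) +
      η s * ((∫ y, deriv (deriv (deriv h)) y * w s y) + ∫ y, deriv h y * F s y)) := by
  have hh₁ := (contDiff_infty_iff_deriv.1 hh).2
  have hh₂ := (contDiff_infty_iff_deriv.1 hh₁).2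
  have hslice : ∀ {g : ℝ → ℝ} {v : ℝ → ℝ → ℝ}, Continuous g → HasCompactSupport g →
      (Continuous fun q : ℝ × ℝ => v q.1 q.2) → ∀ s, Integrable fun y => g y * v s y :=
    fun hg hg_compact hv s => (hg.mul (hv.comp (by fun_prop : Continuous fun y =>
      (s, y)))).integrable_of_hasCompactSupport hg_compact.mul_right
  have hw₀ := hslice hh.continuous hh_compact hw
  have hw₃ := hslice (hh₂.continuous_deriv (by simp)) hh_compact.deriv.deriv.deriv hw
  have hF₁ := hslice hh₁.continuous hh_compact.deriv hF
  rw [Measure.volume_eq_prod, integral_prod _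
    (integrable_testPairing hη hη_compact hh hh_compact hw hF)]
  congr 1 with s
  simp only [testPairing, mul_assoc, ← mul_add]
  rw [integral_add ((hw₀ s).const_mul _) (((hw₃ s).fun_add (hF₁ s)).const_mul _),
    integral_const_mul, integral_const_mul, integral_add (hw₃ s) (hF₁ s)]

end TestFunctions

/-- Continuous weak solutions of `∂ₜw + ∂ₓ³w + ∂ₓF = 0` on `(t₁, t₂) × ℝ` with `w(t₁) = 0`, with `w`
decaying and `F` dominated by `decay² |w|`. Testing against tensor products `η(t)h(x)` is enough for
the uniqueness theorem. -/
structure IsWeakAirySol (t₁ t₂ K L : ℝ) (w F : ℝ → ℝ → ℝ) : Prop where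
  continuous : Continuous fun q : ℝ × ℝ => w q.1 q.2
  continuous_source : Continuous fun q : ℝ × ℝ => F q.1 q.2
  abs_le_decay : ∀ t x, |w t x| ≤ K * decay x
  abs_source_le : ∀ t x, |F t x| ≤ L * decay x ^ 2 * |w t x|
  weak : ∀ η h : ℝ → ℝ, ContDiff ℝ ∞ η → HasCompactSupport η → tsupport η ⊆ Ioo t₁ t₂ →
    ContDiff ℝ ∞ h → HasCompactSupport h →
    ∫ q, testPairing η h w F q = 0
  initial : ∀ x, w t₁ x = 0

namespace IsWeakAirySol

variable {t₁ t₂ K L : ℝ} {w F : ℝ → ℝ → ℝ} {k : ℝ → ℝ}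

lemma K_nonneg (hw : IsWeakAirySol t₁ t₂ K L w F) : 0 ≤ K :=
  nonneg_of_mul_nonneg_left ((abs_nonneg _).trans (hw.abs_le_decay 0 0)) (decay_pos 0)

lemma abs_le (hw : IsWeakAirySol t₁ t₂ K L w F) (t x : ℝ) : |w t x| ≤ K :=
  (hw.abs_le_decay t x).trans (mul_le_of_le_one_right hw.K_nonneg (decay_le_one x))

lemma abs_source_le_decay (hw : IsWeakAirySol t₁ t₂ K L w F) (t x : ℝ) :
    |F t x| ≤ |L| * K * decay x ^ 3 := by
  have hdecay := decay_pos x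
  calc |F t x| ≤ L * decay x ^ 2 * |w t x| := hw.abs_source_le t x
    _ ≤ |L| * decay x ^ 2 * (K * decay x) := by
      gcongr
      exacts [le_abs_self L, hw.abs_le_decay t x]
    _ = |L| * K * decay x ^ 3 := by ring

lemma abs_source_le_const (hw : IsWeakAirySol t₁ t₂ K L w F) (t x : ℝ) : |F t x| ≤ |L| * K :=
  (hw.abs_source_le_decay t x).trans (mul_le_of_le_one_right
    (mul_nonneg (abs_nonneg L) hw.K_nonneg) (pow_le_one₀ (decay_pos x).le (decay_le_one x)))

lemma continuous_apply (hw : IsWeakAirySol t₁ t₂ K L w F) (t : ℝ) : Continuous (w t) :=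
  hw.continuous.comp (by fun_prop : Continuous fun y => (t, y))

lemma continuous_source_apply (hw : IsWeakAirySol t₁ t₂ K L w F) (t : ℝ) : Continuous (F t) :=
  hw.continuous_source.comp (by fun_prop : Continuous fun y => (t, y))

lemma continuous_time (hw : IsWeakAirySol t₁ t₂ K L w F) (x : ℝ) : Continuous fun t => w t x :=
  hw.continuous.comp (by fun_prop : Continuous fun t => (t, x))

lemma continuous_source_time (hw : IsWeakAirySol t₁ t₂ K L w F) (x : ℝ) :
    Continuous fun t => F t x :=
  hw.continuous_source.comp (by fun_prop : Continuous fun t => (t, x))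

lemma isDecaying (hw : IsWeakAirySol t₁ t₂ K L w F) (t : ℝ) : IsDecaying (w t) :=
  ⟨hw.continuous_apply t, K, hw.abs_le_decay t⟩

section Mollified

lemma continuous_convolution_time (hw : IsWeakAirySol t₁ t₂ K L w F) (hk : IsKernel k) (x : ℝ) :
    Continuous fun t => (k ⋆ w t) x :=
  hk.continuous_convolution_param hw.continuous hw.abs_le x

lemma continuous_convolution_source_time (hw : IsWeakAirySol t₁ t₂ K L w F) (hk : IsKernel k)
    (x : ℝ) : Continuous fun t => (k ⋆ F t) x :=
  hk.continuous_convolution_param hw.continuous_source hw.abs_source_le_const x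

lemma abs_convolution_le_decay (hw : IsWeakAirySol t₁ t₂ K L w F) (hk : IsKernel k) (t x : ℝ) :
    |(k ⋆ w t) x| ≤ (∫ y, |k y|) * (2 * K) * decay x := by
  simpa using hk.abs_convolution_le_decay_pow 1 (by simpa using hw.abs_le_decay t) x

lemma abs_convolution_source_le_decay_pow_three (hw : IsWeakAirySol t₁ t₂ K L w F)
    (hk : IsKernel k) (t x : ℝ) :
    |(k ⋆ F t) x| ≤ (∫ y, |k y|) * (2 ^ 3 * (|L| * K)) * decay x ^ 3 :=
  hk.abs_convolution_le_decay_pow 3 (hw.abs_source_le_decay t) x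

lemma abs_convolution_source_le_decay (hw : IsWeakAirySol t₁ t₂ K L w F) (hk : IsKernel k)
    (t x : ℝ) : |(k ⋆ F t) x| ≤ (∫ y, |k y|) * (2 ^ 3 * (|L| * K)) * decay x := by
  have hK := hw.K_nonneg
  refine (hw.abs_convolution_source_le_decay_pow_three hk t x).trans (mul_le_mul_of_nonneg_left
    (pow_le_of_le_one (decay_pos x).le (decay_le_one x) three_ne_zero) ?_)
  exact mul_nonneg (integral_nonneg fun y => abs_nonneg _) (by positivity)

lemma isDecaying_convolution (hw : IsWeakAirySol t₁ t₂ K L w F) (hk : IsKernel k) (t : ℝ) :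
    IsDecaying (k ⋆ w t) :=
  ⟨hk.continuous_convolution (hw.continuous_apply t), _, hw.abs_convolution_le_decay hk t⟩

lemma isDecaying_convolution_source (hw : IsWeakAirySol t₁ t₂ K L w F) (hk : IsKernel k) (t : ℝ) :
    IsDecaying (k ⋆ F t) :=
  ⟨hk.continuous_convolution (hw.continuous_source_apply t), _,
    hw.abs_convolution_source_le_decay hk t⟩

lemma hasDerivAt_convolution_time (hw : IsWeakAirySol t₁ t₂ K L w F) (hk : IsKernel k) (x : ℝ)
    {t : ℝ} (ht : t ∈ Ioo t₁ t₂) :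
    HasDerivAt (fun s => (k ⋆ w s) x)
      (-(deriv (deriv (deriv k)) ⋆ w t) x - (deriv k ⋆ F t) x) t := by
  have hk₃ := hk.deriv.deriv.deriv
  refine hasDerivAt_of_integral_deriv_mul_add_eq_zero
    (B := fun t => -(deriv (deriv (deriv k)) ⋆ w t) x - (deriv k ⋆ F t) x) isOpen_Ioo
    (hw.continuous_convolution_time hk x)
    ((hw.continuous_convolution_time hk₃ x).neg.sub
      (hw.continuous_convolution_source_time hk.deriv x)) (fun η hη hη_compact hη_supp => ?_) ht
  have htest := hw.weak η (fun y => k (x - y)) hη hη_compact hη_supp (hk.contDiff_comp_sub x)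
    (hk.hasCompactSupport_comp_sub x)
  rw [integral_testPairing hη hη_compact (hk.contDiff_comp_sub x) (hk.hasCompactSupport_comp_sub x)
    hw.continuous hw.continuous_source] at htest
  simpa only [IsKernel.deriv_comp_sub, deriv.fun_neg', neg_neg, neg_mul, integral_neg,
    ← sub_eq_add_neg, convolution_lsmul_swap, smul_eq_mul] using htest

lemma hasDerivAt_energy_convolution (hw : IsWeakAirySol t₁ t₂ K L w F) (hk : IsKernel k)
    {t : ℝ} (ht : t ∈ Ioo t₁ t₂) :
    HasDerivAt (fun s => energy (k ⋆ w s))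
      (∫ x, weightSource (k ⋆ w t) (deriv k ⋆ w t) (k ⋆ F t) x) t := by
  have hk₁ := hk.deriv
  have hk₂ := hk₁.deriv
  have hk₃ := hk₂.deriv
  have hrate : ∀ s, Continuous fun x => -(deriv (deriv (deriv k)) ⋆ w s) x - (deriv k ⋆ F s) x :=
    fun s => (hw.isDecaying_convolution hk₃ s).continuous.neg.sub
      (hw.isDecaying_convolution_source hk₁ s).continuous
  have hrate_le : ∀ s x, |-(deriv (deriv (deriv k)) ⋆ w s) x - (deriv k ⋆ F s) x| ≤
      ((∫ y, |deriv (deriv (deriv k)) y|) * (2 * K)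
        + (∫ y, |deriv k y|) * (2 ^ 3 * (|L| * K))) * decay x := fun s x => by
    rw [add_mul]
    refine (abs_sub _ _).trans (add_le_add ?_ (hw.abs_convolution_source_le_decay hk₁ s x))
    simpa only [abs_neg] using hw.abs_convolution_le_decay hk₃ s x
  refine (hasDerivAt_energy (isOpen_Ioo.mem_nhds ht)
    (fun s => (hw.isDecaying_convolution hk s).continuous) (hrate t)
    (hw.abs_convolution_le_decay hk) hrate_le
    fun s hs x => hw.hasDerivAt_convolution_time hk x hs).congr_deriv ?_
  exact integral_two_mul_mul_neg_sub_mul_weight_eq (hw.isDecaying_convolution hk t)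
    (hw.isDecaying_convolution hk₁ t) (hw.isDecaying_convolution hk₂ t)
    (hw.isDecaying_convolution hk₃ t) (hw.isDecaying_convolution_source hk t)
    (hw.isDecaying_convolution_source hk₁ t)
    (hk.hasDerivAt_convolution (hw.continuous_apply t))
    (hk₁.hasDerivAt_convolution (hw.continuous_apply t))
    (hk₂.hasDerivAt_convolution (hw.continuous_apply t))
    (hk.hasDerivAt_convolution (hw.continuous_source_apply t))

lemma integral_weightSource_convolution_le (hw : IsWeakAirySol t₁ t₂ K L w F) (hk : IsKernel k)
    (t : ℝ) : ∫ x, weightSource (k ⋆ w t) (deriv k ⋆ w t) (k ⋆ F t) x ≤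
      ∫ x, energyDensity (k ⋆ w t) (k ⋆ F t) x := by
  have hwk := hw.isDecaying_convolution hk t
  have hFk := hw.isDecaying_convolution_source hk t
  refine integral_mono (integrable_weightSource hwk (hw.isDecaying_convolution hk.deriv t) hFk)
    (integrable_of_abs_le (continuous_energyDensity hwk.continuous hFk.continuous) fun x =>
      abs_energyDensity_le (hw.abs_convolution_le_decay hk t x)
        (hw.abs_convolution_source_le_decay_pow_three hk t x))
    (weightSource_le_energyDensity _ _ _)

lemma continuous_integral_energyDensity_convolution (hw : IsWeakAirySol t₁ t₂ K L w F)
    (hk : IsKernel k) : Continuous fun s => ∫ x, energyDensity (k ⋆ w s) (k ⋆ F s) x :=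
  continuous_integral_energyDensity (fun s => (hw.isDecaying_convolution hk s).continuous)
    (fun s => (hw.isDecaying_convolution_source hk s).continuous)
    (hw.continuous_convolution_time hk) (hw.continuous_convolution_source_time hk)
    (hw.abs_convolution_le_decay hk) (hw.abs_convolution_source_le_decay_pow_three hk)

lemma energy_convolution_le (hw : IsWeakAirySol t₁ t₂ K L w F) (hk : IsKernel k) {t : ℝ}
    (ht : t ∈ Icc t₁ t₂) :
    energy (k ⋆ w t) ≤ ∫ s in t₁..t, ∫ x, energyDensity (k ⋆ w s) (k ⋆ F s) x := by
  have hgrowth := intervalIntegral.sub_le_integral_of_hasDeriv_right_of_le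
    (g := fun s => energy (k ⋆ w s)) ht.1
    (continuous_energy (fun s => (hw.isDecaying_convolution hk s).continuous)
      (hw.continuous_convolution_time hk) (hw.abs_convolution_le_decay hk)).continuousOn
    (fun s hs => (hw.hasDerivAt_energy_convolution hk
      ⟨hs.1, hs.2.trans_le ht.2⟩).hasDerivWithinAt)
    (hw.continuous_integral_energyDensity_convolution hk).continuousOn.integrableOn_Icc
    fun s _ => hw.integral_weightSource_convolution_le hk s
  have hinitial : w t₁ = 0 := funext hw.initial
  simpa [hinitial, energy] using hgrowth

end Mollified

lemma continuous_energy (hw : IsWeakAirySol t₁ t₂ K L w F) : Continuous fun s => energy (w s) :=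
  MKdVPaper.continuous_energy hw.continuous_apply hw.continuous_time hw.abs_le_decay

lemma energy_le_integral_energyDensity (hw : IsWeakAirySol t₁ t₂ K L w F) {t : ℝ}
    (ht : t ∈ Icc t₁ t₂) :
    energy (w t) ≤ ∫ s in t₁..t, ∫ x, energyDensity (w s) (F s) x := by
  have hk := IsKernel.mollifier
  have hw_cont := fun n s => (hw.isDecaying_convolution (hk n) s).continuous
  have hF_cont := fun n s => (hw.isDecaying_convolution_source (hk n) s).continuous
  have hw_le : ∀ n s x, |(mollifier n ⋆ w s) x| ≤ 2 * K * decay x := fun n s x => by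
    simpa only [integral_abs_mollifier, one_mul] using hw.abs_convolution_le_decay (hk n) s x
  have hF_le : ∀ n s x, |(mollifier n ⋆ F s) x| ≤ 2 ^ 3 * (|L| * K) * decay x ^ 3 := fun n s x => by
    simpa only [integral_abs_mollifier, one_mul] using
      hw.abs_convolution_source_le_decay_pow_three (hk n) s x
  have hw_lim := fun s => tendsto_mollifier_convolution (hw.continuous_apply s)
  have hF_lim := fun s => tendsto_mollifier_convolution (hw.continuous_source_apply s)
  refine le_of_tendsto_of_tendsto'
    (tendsto_energy (fun n => hw_cont n t) (fun n => hw_le n t) (hw_lim t)) ?_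
    fun n => hw.energy_convolution_le (hk n) ht
  refine intervalIntegral.tendsto_integral_filter_of_dominated_convergence _
    (Eventually.of_forall fun n =>
      (hw.continuous_integral_energyDensity_convolution (hk n)).aestronglyMeasurable)
    (Eventually.of_forall fun n => ae_of_all _ fun s _ =>
      norm_integral_le_of_norm_le (integrable_decay_sq_mul_weight.const_mul _)
        (ae_of_all _ fun x => abs_energyDensity_le (hw_le n s x) (hF_le n s x)))
    intervalIntegrable_const
    (ae_of_all _ fun s _ => tendsto_integral_energyDensity (fun n => hw_cont n s)
      (fun n => hF_cont n s) (fun n => hw_le n s) (fun n => hF_le n s) (hw_lim s) (hF_lim s))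

lemma integral_energyDensity_le (hw : IsWeakAirySol t₁ t₂ K L w F) (t : ℝ) :
    ∫ x, energyDensity (w t) (F t) x ≤ (18 + 18 * L ^ 2) * energy (w t) := by
  rw [energy, ← integral_const_mul]
  exact integral_mono
    (integrable_of_abs_le (continuous_energyDensity (hw.continuous_apply t)
      (hw.continuous_source_apply t)) fun x =>
        abs_energyDensity_le (hw.abs_le_decay t x) (hw.abs_source_le_decay t x))
    ((hw.isDecaying t).integrable_sq_mul_weight.const_mul _)
    fun x => energyDensity_le (hw.abs_source_le t x)

lemma energy_le (hw : IsWeakAirySol t₁ t₂ K L w F) {t : ℝ} (ht : t ∈ Icc t₁ t₂) :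
    energy (w t) ≤ (18 + 18 * L ^ 2) * ∫ s in t₁..t, energy (w s) := by
  have hdensity : Continuous fun s => ∫ x, energyDensity (w s) (F s) x :=
    continuous_integral_energyDensity hw.continuous_apply hw.continuous_source_apply
      hw.continuous_time hw.continuous_source_time hw.abs_le_decay hw.abs_source_le_decay
  refine (hw.energy_le_integral_energyDensity ht).trans ?_
  rw [← intervalIntegral.integral_const_mul]
  exact intervalIntegral.integral_mono_on ht.1 (hdensity.intervalIntegrable _ _)
    ((hw.continuous_energy.const_mul _).intervalIntegrable _ _)
    fun s _ => hw.integral_energyDensity_le s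

lemma eq_zero (hw : IsWeakAirySol t₁ t₂ K L w F) {t : ℝ} (ht : t ∈ Icc t₁ t₂) : w t = 0 :=
  (hw.isDecaying t).eq_zero_of_energy_eq_zero <|
    eq_zero_of_le_mul_integral hw.continuous_energy (fun s _ => energy_nonneg (w s))
      (fun _ hs => hw.energy_le hs) ht

end IsWeakAirySol

/-! ### Differences of mKdV solutions -/

lemma FiniteEnorm.exists_profileNorm_le {t₁ t₂ : ℝ} {u : ESol (Icc t₁ t₂)} (ht₁ : 0 < t₁)
    (hu : FiniteEnorm (Icc t₁ t₂) u) : ∃ N, ∀ t ∈ Icc t₁ t₂, profileNorm (u.w t) ≤ N := by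
  obtain ⟨B, hB⟩ := hu
  refine ⟨B + B / t₂ ^ (-(1 / 6) : ℝ), fun t ht => ?_⟩
  have ht_pos : 0 < t := ht₁.trans_le ht.1
  have hE : EnormP t (u.w t) ≤ B := hB (mem_image_of_mem _ ht)
  have hsup : 0 ≤ supN (u.w t) := (u.memE t ht).supN_nonneg
  have hderiv : 0 ≤ dL2 (u.w t) := ENNReal.toReal_nonneg
  have hscale : t₂ ^ (-(1 / 6) : ℝ) ≤ t ^ (-(1 / 6) : ℝ) :=
    Real.rpow_le_rpow_of_nonpos ht_pos ht.2 (by norm_num)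
  have hscaled : t₂ ^ (-(1 / 6) : ℝ) * dL2 (u.w t) ≤ t ^ (-(1 / 6) : ℝ) * dL2 (u.w t) :=
    mul_le_mul_of_nonneg_right hscale hderiv
  have hscaled_nonneg : 0 ≤ t ^ (-(1 / 6) : ℝ) * dL2 (u.w t) := by positivity
  rw [EnormP] at hE
  refine add_le_add (by linarith) ((le_div_iff₀' ?_).2 (by linarith))
  exact Real.rpow_pos_of_pos (ht_pos.trans_le ht.2) _

lemma FiniteEnorm.exists_continuous_extension {t₁ t₂ : ℝ} {u : ESol (Icc t₁ t₂)} (ht₁ : 0 < t₁)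
    (ht₁₂ : t₁ ≤ t₂) (hu : FiniteEnorm (Icc t₁ t₂) u) :
    ∃ (K : ℝ) (U : ℝ → ℝ → ℝ), (Continuous fun q : ℝ × ℝ => U q.1 q.2) ∧
      (∀ t x, |U t x| ≤ K * decay x) ∧ EqOn U u.u (Icc t₁ t₂) := by
  obtain ⟨N, hN⟩ := hu.exists_profileNorm_le ht₁
  let T : ℝ → ℝ := fun s => projIcc t₁ t₂ ht₁₂ s
  have hT : Continuous T := continuous_subtype_val.comp continuous_projIcc
  have hT_mem : ∀ s, T s ∈ Icc t₁ t₂ := fun s => (projIcc t₁ t₂ ht₁₂ s).2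
  have hκ : 0 < min 1 t₁ := lt_min one_pos ht₁
  have hκT : ∀ s, min 1 t₁ ≤ T s := fun s => (min_le_right 1 t₁).trans (hT_mem s).1
  refine ⟨20 * N / min 1 t₁, fun s => u.u (T s), ?_, fun s x => ?_, fun t ht => ?_⟩
  · exact continuous_phys (w := fun s => u.w (T s)) hT (fun s => u.memE _ (hT_mem s))
      (fun s => hN _ (hT_mem s)) hκ hκT (fun p hp => u.contt.comp_continuous
        (by fun_prop : Continuous fun s => (T s, p)) fun s => ⟨hT_mem s, hp⟩)
      fun s => u.isPhys _ (hT_mem s)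
  · refine ((u.memE _ (hT_mem s)).abs_le_decay hκ (min_le_left 1 t₁) (hκT s)
      (u.isPhys _ (hT_mem s)) x).trans ?_
    have hdecay := decay_pos x
    gcongr
    exact hN _ (hT_mem s)
  · simp only [T, projIcc_of_mem ht₁₂ ht]

lemma dt1_mul (η h : ℝ → ℝ) :
    dt1 (fun t x => η t * h x) = fun t x => deriv η t * h x := by
  ext t x; simp [dt1]

lemma dx1_mul (η h : ℝ → ℝ) :
    dx1 (fun t x => η t * h x) = fun t x => η t * deriv h x := by
  ext t x; simp [dx1]

lemma tsupport_mul_prod_subset (η h : ℝ → ℝ) :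
    tsupport (fun q : ℝ × ℝ => η q.1 * h q.2) ⊆ tsupport η ×ˢ tsupport h :=
  closure_minimal (fun _ hq => ⟨subset_tsupport _ (left_ne_zero_of_mul hq),
    subset_tsupport _ (right_ne_zero_of_mul hq)⟩) ((isClosed_tsupport η).prod (isClosed_tsupport h))

lemma IsSolOn.integral_testPairing_eq_zero {ε t₁ t₂ : ℝ} {u U : ℝ → ℝ → ℝ} {η h : ℝ → ℝ}
    (hu : IsSolOn ε u (Icc t₁ t₂)) (hU : EqOn U u (Icc t₁ t₂))
    (hη : ContDiff ℝ ∞ η) (hη_compact : HasCompactSupport η) (hη_supp : tsupport η ⊆ Ioo t₁ t₂)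
    (hh : ContDiff ℝ ∞ h) (hh_compact : HasCompactSupport h) :
    ∫ q, testPairing η h U (fun t x => ε * U t x ^ 3) q = 0 := by
  have htest := hu (fun t x => η t * h x) ((hη.comp contDiff_fst).mul (hh.comp contDiff_snd))
    (HasCompactSupport.of_support_subset_isCompact (hη_compact.isCompact.prod hh_compact.isCompact)
      ((subset_tsupport _).trans (tsupport_mul_prod_subset η h)))
    ((tsupport_mul_prod_subset η h).trans
      (by rw [interior_Icc]; exact prod_mono hη_supp (subset_univ _)))
  rw [← htest]
  congr 1 with q
  simp only [dt1_mul, dx1_mul, testPairing]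
  by_cases hq : q.1 ∈ Icc t₁ t₂
  · rw [hU hq]; ring
  · have hq_notMem : q.1 ∉ tsupport η := fun hmem => hq (Ioo_subset_Icc_self (hη_supp hmem))
    have hη_zero : η q.1 = 0 := image_eq_zero_of_notMem_tsupport hq_notMem
    have hη'_zero : deriv η q.1 = 0 :=
      image_eq_zero_of_notMem_tsupport fun hmem => hq_notMem (tsupport_deriv_subset hmem)
    simp [hη_zero, hη'_zero]

lemma abs_cube_sub_cube_le {a b c : ℝ} (ha : |a| ≤ c) (hb : |b| ≤ c) :
    |a ^ 3 - b ^ 3| ≤ 3 * c ^ 2 * |a - b| := by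
  have hfactor : |a ^ 2 + a * b + b ^ 2| ≤ 3 * c ^ 2 := by
    rw [abs_le] at *
    constructor <;> nlinarith
  rw [show a ^ 3 - b ^ 3 = (a ^ 2 + a * b + b ^ 2) * (a - b) by ring, abs_mul]
  gcongr

lemma IsSolOn.isWeakAirySol_sub {ε t₁ t₂ K K' : ℝ} {u v U V : ℝ → ℝ → ℝ} (ht₁₂ : t₁ ≤ t₂)
    (hu : IsSolOn ε u (Icc t₁ t₂)) (hv : IsSolOn ε v (Icc t₁ t₂)) (hinit : u t₁ = v t₁)
    (hUu : EqOn U u (Icc t₁ t₂)) (hVv : EqOn V v (Icc t₁ t₂))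
    (hU : Continuous fun q : ℝ × ℝ => U q.1 q.2) (hV : Continuous fun q : ℝ × ℝ => V q.1 q.2)
    (hU_le : ∀ t x, |U t x| ≤ K * decay x) (hV_le : ∀ t x, |V t x| ≤ K' * decay x) :
    IsWeakAirySol t₁ t₂ (K + K') (3 * |ε| * max K K' ^ 2) (fun t x => U t x - V t x)
      (fun t x => ε * U t x ^ 3 - ε * V t x ^ 3) where
  continuous := hU.sub hV
  continuous_source := by fun_prop
  abs_le_decay t x := by
    rw [add_mul]
    exact (abs_sub _ _).trans (add_le_add (hU_le t x) (hV_le t x))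
  abs_source_le t x := by
    have hdecay := (decay_pos x).le
    rw [← mul_sub, abs_mul]
    calc |ε| * |U t x ^ 3 - V t x ^ 3|
        ≤ |ε| * (3 * (max K K' * decay x) ^ 2 * |U t x - V t x|) := by
          gcongr
          exact abs_cube_sub_cube_le
            ((hU_le t x).trans (mul_le_mul_of_nonneg_right (le_max_left _ _) hdecay))
            ((hV_le t x).trans (mul_le_mul_of_nonneg_right (le_max_right _ _) hdecay))
      _ = 3 * |ε| * max K K' ^ 2 * decay x ^ 2 * |U t x - V t x| := by ring
  weak η h hη hη_compact hη_supp hh hh_compact := by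
    have hsub := integral_sub
      (integrable_testPairing (F := fun t x => ε * U t x ^ 3) hη hη_compact hh hh_compact hU
        (by fun_prop))
      (integrable_testPairing (F := fun t x => ε * V t x ^ 3) hη hη_compact hh hh_compact hV
        (by fun_prop))
    rw [hu.integral_testPairing_eq_zero hUu hη hη_compact hη_supp hh hh_compact,
      hv.integral_testPairing_eq_zero hVv hη hη_compact hη_supp hh hh_compact, sub_zero] at hsub
    rw [← hsub]
    congr 1 with q
    simp only [testPairing]
    ring
  initial x := by
    have hmem := left_mem_Icc.2 ht₁₂
    rw [hUu hmem, hVv hmem, hinit, sub_self]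

theorem mkdv_forward_uniqueness_general (ε : ℝ) {t₁ t₂ : ℝ} (ht₁ : 0 < t₁)
    (u v : ESol (Icc t₁ t₂))
    (hu : IsSolOn ε u.u (Icc t₁ t₂)) (hv : IsSolOn ε v.u (Icc t₁ t₂))
    (hufin : FiniteEnorm (Icc t₁ t₂) u) (hvfin : FiniteEnorm (Icc t₁ t₂) v)
    (hinit : u.u t₁ = v.u t₁) :
    ∀ t ∈ Icc t₁ t₂, u.u t = v.u t := by
  intro t ht
  have ht₁₂ : t₁ ≤ t₂ := ht.1.trans ht.2
  obtain ⟨K, U, hU, hU_le, hUu⟩ := hufin.exists_continuous_extension ht₁ ht₁₂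
  obtain ⟨K', V, hV, hV_le, hVv⟩ := hvfin.exists_continuous_extension ht₁ ht₁₂
  have hdiff := hu.isWeakAirySol_sub ht₁₂ hv hinit hUu hVv hU hV hU_le hV_le
  rw [← hUu ht, ← hVv ht]
  exact sub_eq_zero.1 (hdiff.eq_zero ht)

/-- forward uniqueness for mKdV in `E`. -/
theorem mkdv_forward_uniqueness (ε : ℝ) (hε : ε = 1 ∨ ε = -1)
    (t₁ t₂ : ℝ) (ht₁ : 0 < t₁) (ht₁₂ : t₁ < t₂)
    (u v : ESol (Icc t₁ t₂))
    (hu : IsSolOn ε u.u (Icc t₁ t₂)) (hv : IsSolOn ε v.u (Icc t₁ t₂))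
    (hufin : FiniteEnorm (Icc t₁ t₂) u) (hvfin : FiniteEnorm (Icc t₁ t₂) v)
    (hinit : u.u t₁ = v.u t₁) :
    ∀ t ∈ Icc t₁ t₂, u.u t = v.u t :=
  mkdv_forward_uniqueness_general ε ht₁ u v hu hv hufin hvfin hinit

end MKdVPaper
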